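/- For n ≥ 3, the graded Betti numbers in homological degree n and internal degree n+3 satisfy β_{n,n+3}(S/I) = β_{n,n+3}(S/in_<(I)) = 1, where I is the join-meet ideal of the diamond lattice D_{n+2} and in_<(I) its initial ideal with respect to the reverse lexicographic order induced by x > y_1 > ⋯ > y_n > z. -/

import Mathlib

open MvPolynomial

noncomputable def xP (K : Type*) [Field K] (n : ℕ) : MvPolynomial (Fin (n + 2)) K := X 0
noncomputable def zP (K : Type*) [Field K] (n : ℕ) : MvPolynomial (Fin (n + 2)) K :=
  X (Fin.last (n + 1))
noncomputable def yP (K : Type*) [Field K] (n : ℕ) (i : Fin n) : MvPolynomial (Fin (n + 2)) K :=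
  X i.succ.castSucc

/-- The join-meet ideal `I` of the diamond lattice `D_{n+2}`. -/
noncomputable def diamondIdeal (K : Type*) [Field K] (n : ℕ) :
    Ideal (MvPolynomial (Fin (n + 2)) K) :=
  Ideal.span {f | ∃ i j : Fin n, i < j ∧ f = yP K n i * yP K n j - xP K n * zP K n}

/-- The initial ideal `in_<(I)` of `I` w.r.t. the reverse lexicographic order induced by
`x > y_1 > ⋯ > y_n > z`, as computed in the paper:
`(y_i y_j : i < j) + (x y_k z : k ≤ n-1) + (x y_n² z)`. -/
noncomputable def diamondIni (K : Type*) [Field K] (n : ℕ) (hn : 1 ≤ n) :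
    Ideal (MvPolynomial (Fin (n + 2)) K) :=
  Ideal.span
    ({f | ∃ i j : Fin n, i < j ∧ f = yP K n i * yP K n j} ∪
      {f | ∃ k : Fin n, (k : ℕ) < n - 1 ∧ f = xP K n * yP K n k * zP K n} ∪
      {xP K n * (yP K n ⟨n - 1, by omega⟩) ^ 2 * zP K n})

def mdeg {σ : Type*} (m : σ →₀ ℕ) : ℕ := m.sum fun _ e => e

/-- A minimal graded free resolution
`⋯ → F_{i+1} → F_i → ⋯ → F_0 → S/I → 0` of `S/I` over `S = K[x_s : s ∈ σ]`.
`F_i` is free with finite homogeneous basis `B i`, the basis element `b : B i` having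
degree `deg i b`; the differentials are graded and have entries in the graded maximal
ideal (minimality); `ε` is a lift of the augmentation `F_0 → S/I`. -/
structure MinGradedFreeRes (K : Type*) [Field K] (σ : Type*) (I : Ideal (MvPolynomial σ K)) where
  B : ℕ → Type
  finB : ∀ i, Finite (B i)
  deg : ∀ i, B i → ℕ
  d : ∀ i, ((B (i + 1)) →₀ MvPolynomial σ K) →ₗ[MvPolynomial σ K] ((B i) →₀ MvPolynomial σ K)
  ε : ((B 0) →₀ MvPolynomial σ K) →ₗ[MvPolynomial σ K] MvPolynomial σ K
  ε_homog : ∀ b : B 0, (ε (Finsupp.single b 1)).IsHomogeneous (deg 0 b)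
  surj : ∀ s : MvPolynomial σ K, ∃ t, ε t - s ∈ I
  exact0 : LinearMap.range (d 0) = Submodule.comap ε (I : Submodule _ _)
  exact : ∀ i, LinearMap.range (d (i + 1)) = LinearMap.ker (d i)
  homog : ∀ i (b : B (i + 1)) (c : B i),
    ∀ m ∈ ((d i (Finsupp.single b 1)) c).support, mdeg m + deg i c = deg (i + 1) b
  minimal : ∀ i (b : B (i + 1)) (c : B i), coeff 0 ((d i (Finsupp.single b 1)) c) = 0

/-- The graded Betti number `β_{i,j}(S/I)` read off from a minimal graded free resolution:
the number of basis elements of `F_i` of degree `j`. -/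
noncomputable def MinGradedFreeRes.betti {K : Type*} [Field K] {σ : Type*}
    {I : Ideal (MvPolynomial σ K)} (F : MinGradedFreeRes K σ I) (i j : ℕ) : ℕ :=
  Nat.card {b : F.B i // F.deg i b = j}

/-!
Let `l 0, …, l (n + 1)` be a basis of the linear forms such that `l 0, l 1` is a regular sequence
on `S / I`. For a minimal resolution `F`, the complexes `F ⊗ S / (l 0, …, l k)` interpolate between
the resolution of the Artinian ring `A = S / (I + (l 0, l 1))` over `S / (l 0, l 1)` and the complex
`F ⊗ K`, whose differentials vanish. Each further linear form moves socles up by one homological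
and one internal degree, so `β_{n,n+3}(S / I)` is the dimension of the socle of `A` in degree `3`.

For `w = x z`, both ideals satisfy `I + (w) = (y_i y_j : i < j) + (w)`, and `I : w` is the ideal of
the cone over a possibly degenerate conic in a plane. The cube of the maximal ideal lies in
`I + (w) + (l 0, l 1)`, so `A` in degree `3` is `w` times the degree `1` part of the Artinian
reduction of the cone. That part is one-dimensional, and it is the socle of the reduction.
-/

section Grading

variable {K σ B B' : Type*} [Field K]

lemma mem_ideal_smul_top_finsupp_iff {R ι : Type*} [CommRing R] {J : Ideal R} {u : ι →₀ R} :
    u ∈ (J • ⊤ : Submodule R (ι →₀ R)) ↔ ∀ b, u b ∈ J := by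
  refine ⟨fun hu b => ?_, fun hu => ?_⟩
  · simpa using Submodule.smul_top_le_comap_smul_top J (Finsupp.lapply b) hu
  · rw [← u.sum_single]
    refine Submodule.sum_mem _ fun b _ => ?_
    simpa using Submodule.smul_mem_smul (hu b)
      (Submodule.mem_top : Finsupp.single b (1 : R) ∈ (⊤ : Submodule R (ι →₀ R)))

lemma mem_idealOfVars_iff {s : MvPolynomial σ K} : s ∈ idealOfVars σ K ↔ coeff 0 s = 0 := by
  simpa [Nat.lt_one_iff, Finsupp.degree_eq_zero_iff] using mem_pow_idealOfVars_iff' 1 s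

lemma mdeg_eq_of_isHomogeneous {s : MvPolynomial σ K} {e : ℕ} (hs : s.IsHomogeneous e) {m : σ →₀ ℕ}
    (hm : coeff m s ≠ 0) : mdeg m = e := by
  rw [← hs hm, Pi.one_def, ← Finsupp.degree_eq_weight_one]
  rfl

lemma mem_idealOfVars_of_isHomogeneous_one {a : MvPolynomial σ K} (ha : a.IsHomogeneous 1) :
    a ∈ idealOfVars σ K :=
  mem_idealOfVars_iff.2 (of_not_not fun h => by simpa using ha h)

/-- The homogeneous vectors of degree `j` in the graded free module whose basis vector `b` has
degree `deg b`. -/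
def gradedPiece (K σ : Type*) [Field K] {B : Type*} (deg : B → ℕ) (j : ℕ) :
    Submodule K (B →₀ MvPolynomial σ K) where
  carrier := {u | ∀ b m, coeff m (u b) ≠ 0 → mdeg m + deg b = j}
  zero_mem' := by simp
  add_mem' {u v} hu hv b m h := by
    by_contra hne
    have hu' := not_imp_comm.1 (hu b m) hne
    have hv' := not_imp_comm.1 (hv b m) hne
    simp [hu', hv'] at h
  smul_mem' c u hu b m h := hu b m fun h0 => h (by simp [h0])

/-- The degree `j` component of a polynomial whose degrees are shifted up by `e`: the component
of degree `j - e`, or `0` if `j < e`. -/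
noncomputable def shiftedComponent (K σ : Type*) [Field K] (e j : ℕ) :
    MvPolynomial σ K →ₗ[K] MvPolynomial σ K :=
  if e ≤ j then homogeneousComponent (j - e) else 0

lemma coeff_shiftedComponent (e j : ℕ) (m : σ →₀ ℕ) (s : MvPolynomial σ K) :
    coeff m (shiftedComponent K σ e j s) = if mdeg m + e = j then coeff m s else 0 := by
  unfold shiftedComponent
  change _ = if m.degree + e = j then _ else _
  split_ifs with he h h
  · rw [coeff_homogeneousComponent, if_pos (by omega)]
  · rw [coeff_homogeneousComponent, if_neg (by omega)]
  · omega
  · simp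

lemma shiftedComponent_mul {e e' : ℕ} (j : ℕ) (s : MvPolynomial σ K) {q : MvPolynomial σ K}
    (hq : ∀ m, coeff m q ≠ 0 → mdeg m + e' = e) :
    shiftedComponent K σ e' j (s * q) = shiftedComponent K σ e j s * q := by
  classical
  ext m
  rw [coeff_shiftedComponent, coeff_mul, coeff_mul]
  trans ∑ p ∈ Finset.HasAntidiagonal.antidiagonal m,
      if mdeg m + e' = j then coeff p.1 s * coeff p.2 q else 0
  · rw [Finset.sum_ite_irrel, Finset.sum_const_zero]
  refine Finset.sum_congr rfl fun p hp => ?_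
  have hdeg : mdeg m = mdeg p.1 + mdeg p.2 := by
    rw [← Finset.HasAntidiagonal.mem_antidiagonal.1 hp]; exact map_add Finsupp.degree _ _
  rw [coeff_shiftedComponent]
  by_cases h0 : coeff p.2 q = 0
  · simp [h0]
  · have := hq _ h0
    rw [ite_zero_mul]
    exact if_congr (by omega) rfl rfl

/-- The projection of the graded free module with basis degrees `deg` onto its homogeneous vectors
of degree `j`. -/
noncomputable def gradedProj (K σ : Type*) [Field K] {B : Type*} (deg : B → ℕ) (j : ℕ) :
    (B →₀ MvPolynomial σ K) →ₗ[K] (B →₀ MvPolynomial σ K) :=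
  Finsupp.lsum K fun b => (Finsupp.lsingle b).comp (shiftedComponent K σ (deg b) j)

variable {deg : B → ℕ} {deg' : B' → ℕ}

lemma gradedProj_single (j : ℕ) (b : B) (s : MvPolynomial σ K) :
    gradedProj K σ deg j (Finsupp.single b s) =
      Finsupp.single b (shiftedComponent K σ (deg b) j s) := by
  simp [gradedProj]

lemma gradedProj_apply (j : ℕ) (u : B →₀ MvPolynomial σ K) (b : B) :
    gradedProj K σ deg j u b = shiftedComponent K σ (deg b) j (u b) := by
  classical
  induction u using Finsupp.induction_linear with
  | zero => simp
  | add f g hf hg => simp [hf, hg]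
  | single a s =>
    rw [gradedProj_single, Finsupp.single_apply, Finsupp.single_apply]
    split_ifs with h
    · rw [h]
    · rw [map_zero]

lemma gradedProj_mem (j : ℕ) (u : B →₀ MvPolynomial σ K) :
    gradedProj K σ deg j u ∈ gradedPiece K σ deg j := fun b m h => by
  rw [gradedProj_apply, coeff_shiftedComponent] at h
  exact of_not_not fun hne => h (if_neg hne)

lemma gradedProj_eq_self {j : ℕ} {u : B →₀ MvPolynomial σ K} (hu : u ∈ gradedPiece K σ deg j) :
    gradedProj K σ deg j u = u := by
  ext b m
  rw [gradedProj_apply, coeff_shiftedComponent, ite_eq_left_iff]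
  exact fun hne => (not_imp_comm.1 (hu b m) hne).symm

lemma gradedProj_smul {e : ℕ} {w : B →₀ MvPolynomial σ K} (hw : w ∈ gradedPiece K σ deg e)
    (j : ℕ) (s : MvPolynomial σ K) :
    gradedProj K σ deg j (s • w) = shiftedComponent K σ e j s • w := by
  ext1 b
  simpa only [gradedProj_apply, Finsupp.smul_apply, smul_eq_mul] using
    shiftedComponent_mul j s (hw b)

lemma gradedProj_linearForm_smul {a : MvPolynomial σ K} (ha : a.IsHomogeneous 1) (j : ℕ)
    (u : B →₀ MvPolynomial σ K) :
    gradedProj K σ deg (j + 1) (a • u) = a • gradedProj K σ deg j u := by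
  ext1 b
  have hdeg (m : σ →₀ ℕ) (hm : coeff m a ≠ 0) : mdeg m + deg b = deg b + 1 := by
    rw [mdeg_eq_of_isHomogeneous ha hm, add_comm]
  rw [gradedProj_apply, Finsupp.smul_apply, Finsupp.smul_apply, gradedProj_apply, smul_eq_mul,
    smul_eq_mul, mul_comm, shiftedComponent_mul _ _ hdeg, mul_comm]
  congr 1
  ext m
  rw [coeff_shiftedComponent, coeff_shiftedComponent]
  exact if_congr (by omega) rfl rfl

lemma gradedProj_map (f : (B' →₀ MvPolynomial σ K) →ₗ[MvPolynomial σ K] (B →₀ MvPolynomial σ K))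
    (hf : ∀ b, f (Finsupp.single b 1) ∈ gradedPiece K σ deg (deg' b)) (j : ℕ)
    (u : B' →₀ MvPolynomial σ K) :
    gradedProj K σ deg j (f u) = f (gradedProj K σ deg' j u) := by
  induction u using Finsupp.induction_linear with
  | zero => simp
  | add u v hu hv => simp [hu, hv]
  | single b s =>
    have single_eq (t : MvPolynomial σ K) : Finsupp.single b t = t • Finsupp.single b 1 := by simp
    rw [gradedProj_single, single_eq, single_eq (shiftedComponent _ _ _ _ _), map_smul f,
      gradedProj_smul (hf b), map_smul f]

lemma homogeneousComponent_map (f : (B →₀ MvPolynomial σ K) →ₗ[MvPolynomial σ K] MvPolynomial σ K)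
    (hf : ∀ b, (f (Finsupp.single b 1)).IsHomogeneous (deg b)) (j : ℕ)
    (u : B →₀ MvPolynomial σ K) :
    homogeneousComponent j (f u) = f (gradedProj K σ deg j u) := by
  have hzero : shiftedComponent K σ 0 j = homogeneousComponent j := by simp [shiftedComponent]
  rw [← hzero]
  induction u using Finsupp.induction_linear with
  | zero => simp
  | add u v hu hv => simp [hu, hv]
  | single b s =>
    have single_eq (t : MvPolynomial σ K) : Finsupp.single b t = t • Finsupp.single b 1 := by simp
    rw [gradedProj_single, single_eq, single_eq (shiftedComponent _ _ _ _ _), map_smul f,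
      map_smul f, smul_eq_mul, smul_eq_mul,
      shiftedComponent_mul j s fun m => mdeg_eq_of_isHomogeneous (hf b)]

attribute [local instance] MvPolynomial.gradedAlgebra in
lemma gradedProj_mem_ideal_smul_top {J : Ideal (MvPolynomial σ K)}
    (hJ : J.IsHomogeneous (homogeneousSubmodule σ K)) (j : ℕ) {u : B →₀ MvPolynomial σ K}
    (hu : u ∈ (J • ⊤ : Submodule (MvPolynomial σ K) (B →₀ MvPolynomial σ K))) :
    gradedProj K σ deg j u ∈
      (J • ⊤ : Submodule (MvPolynomial σ K) (B →₀ MvPolynomial σ K)) := by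
  rw [mem_ideal_smul_top_finsupp_iff] at hu ⊢
  intro b
  rw [gradedProj_apply, shiftedComponent]
  split_ifs
  · exact homogeneousComponent_mem_of_mem hJ (hu b) _
  · exact J.zero_mem

end Grading

section Socle

variable {K σ M M' : Type*} [Field K]
  [AddCommGroup M] [Module (MvPolynomial σ K) M] [AddCommGroup M'] [Module (MvPolynomial σ K) M']

/-- The preimage in `M` of the socle of `M ⧸ N`: the elements which every polynomial without
constant term multiplies into `N`. -/
def socle (N : Submodule (MvPolynomial σ K) M) : Submodule (MvPolynomial σ K) M where
  carrier := {u | ∀ s ∈ idealOfVars σ K, s • u ∈ N}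
  zero_mem' := by simp
  add_mem' hu hv s hs := by simpa only [smul_add] using N.add_mem (hu s hs) (hv s hs)
  smul_mem' c u hu s hs := by simpa only [smul_comm s c u] using N.smul_mem c (hu s hs)

lemma mem_socle_iff_of_relation {N : Submodule (MvPolynomial σ K) M}
    {N' : Submodule (MvPolynomial σ K) M'} {R : Submodule (MvPolynomial σ K) (M × M')}
    (hR : ∀ p ∈ R, p.1 ∈ N ↔ p.2 ∈ N') {p : M × M'} (hp : p ∈ R) :
    p.1 ∈ socle N ↔ p.2 ∈ socle N' :=
  forall₂_congr fun s _ => hR (s • p) (R.smul_mem s hp)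

variable [Module K M] [IsScalarTower K (MvPolynomial σ K) M]
  [Module K M'] [IsScalarTower K (MvPolynomial σ K) M']

/-- The `K`-dimension of the space of those socle elements of `M ⧸ N` which are represented in `H`.
For `H` the homogeneous elements of some degree, this is the dimension of the socle of `M ⧸ N` in
that degree. -/
noncomputable def socleRank (N : Submodule (MvPolynomial σ K) M) (H : Submodule K M) : ℕ :=
  Module.finrank K (((socle N).restrictScalars K ⊓ H).map (N.mkQ.restrictScalars K))

lemma finrank_map_eq_of_ker_eq_on {R V W W' : Type*} [Ring R] [AddCommGroup V] [Module R V]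
    [AddCommGroup W] [Module R W] [AddCommGroup W'] [Module R W']
    (f : V →ₗ[R] W) (g : V →ₗ[R] W') (P : Submodule R V)
    (h : ∀ v ∈ P, f v = 0 ↔ g v = 0) :
    Module.finrank R (P.map f) = Module.finrank R (P.map g) := by
  have hker : LinearMap.ker (f.domRestrict P) = LinearMap.ker (g.domRestrict P) := by
    ext v
    exact h v v.2
  rw [← LinearMap.range_domRestrict, ← LinearMap.range_domRestrict]
  exact ((f.domRestrict P).quotKerEquivRange.symm ≪≫ₗ Submodule.quotEquivOfEq _ _ hker ≪≫ₗ
    (g.domRestrict P).quotKerEquivRange).finrank_eq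

lemma socleRank_eq_of_relation {N : Submodule (MvPolynomial σ K) M}
    {N' : Submodule (MvPolynomial σ K) M'} {H : Submodule K M} {H' : Submodule K M'}
    (R : Submodule (MvPolynomial σ K) (M × M')) (hR : ∀ p ∈ R, p.1 ∈ N ↔ p.2 ∈ N')
    (hright : ∀ u ∈ socle N, u ∈ H → ∃ v ∈ H', (u, v) ∈ R)
    (hleft : ∀ v ∈ socle N', v ∈ H' → ∃ u ∈ H, (u, v) ∈ R) :
    socleRank N H = socleRank N' H' := by
  let P : Submodule K (M × M') := R.restrictScalars K ⊓
    (((socle N).restrictScalars K ⊓ H).prod ((socle N').restrictScalars K ⊓ H'))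
  have hfst : P.map (LinearMap.fst K M M') = (socle N).restrictScalars K ⊓ H := by
    refine le_antisymm (Submodule.map_le_iff_le_comap.2 fun p hp => hp.2.1) fun u hu => ?_
    obtain ⟨v, hv, huv⟩ := hright u hu.1 hu.2
    exact ⟨(u, v), ⟨huv, hu, (mem_socle_iff_of_relation hR huv).1 hu.1, hv⟩, rfl⟩
  have hsnd : P.map (LinearMap.snd K M M') = (socle N').restrictScalars K ⊓ H' := by
    refine le_antisymm (Submodule.map_le_iff_le_comap.2 fun p hp => hp.2.2) fun v hv => ?_
    obtain ⟨u, hu, huv⟩ := hleft v hv.1 hv.2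
    exact ⟨(u, v), ⟨huv, ⟨(mem_socle_iff_of_relation hR huv).2 hv.1, hu⟩, hv⟩, rfl⟩
  rw [socleRank, socleRank, ← hfst, ← hsnd, ← Submodule.map_comp, ← Submodule.map_comp]
  refine finrank_map_eq_of_ker_eq_on _ _ P fun p hp => ?_
  simpa using hR p hp.1

lemma socleRank_eq_one {N : Submodule (MvPolynomial σ K) M} {H : Submodule K M} {t : M}
    (htH : t ∈ H) (ht : t ∈ socle N) (htN : t ∉ N)
    (hH : ∀ u ∈ H, u ∈ socle N → ∃ c : K, u - c • t ∈ N) : socleRank N H = 1 := by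
  have himage : ((socle N).restrictScalars K ⊓ H).map (N.mkQ.restrictScalars K) =
      K ∙ N.mkQ t := by
    refine le_antisymm (Submodule.map_le_iff_le_comap.2 fun u hu => ?_)
      ((Submodule.span_singleton_le_iff_mem _ _).2 ⟨t, ⟨ht, htH⟩, rfl⟩)
    obtain ⟨c, hc⟩ := hH u hu.2 hu.1
    exact Submodule.mem_span_singleton.2 ⟨c, ((Submodule.Quotient.eq N).2 hc).symm⟩
  rw [socleRank, himage]
  exact finrank_span_singleton fun h => htN ((Submodule.Quotient.mk_eq_zero N).1 h)

end Socle

section PrefixIdeal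

/-- The ideal generated by the first `k` members of the sequence `l`. -/
def prefixIdeal {R : Type*} [CommRing R] (l : ℕ → R) (k : ℕ) : Ideal R :=
  Ideal.span (l '' Set.Iio k)

lemma prefixIdeal_zero {R : Type*} [CommRing R] (l : ℕ → R) : prefixIdeal l 0 = ⊥ := by
  simp [prefixIdeal]

lemma prefixIdeal_succ {R : Type*} [CommRing R] (l : ℕ → R) (k : ℕ) :
    prefixIdeal l (k + 1) = prefixIdeal l k ⊔ Ideal.span {l k} := by
  rw [prefixIdeal, ← Order.succ_eq_add_one, Order.Iio_succ_eq_insert, Set.image_insert_eq,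
    Ideal.span_insert, sup_comm, prefixIdeal]

attribute [local instance] MvPolynomial.gradedAlgebra in
lemma isHomogeneous_prefixIdeal {K σ : Type*} [Field K] {l : ℕ → MvPolynomial σ K} {e : ℕ}
    (hl : ∀ k, (l k).IsHomogeneous e) (k : ℕ) :
    (prefixIdeal l k).IsHomogeneous (homogeneousSubmodule σ K) := by
  refine Ideal.homogeneous_span _ _ ?_
  rintro _ ⟨i, -, rfl⟩
  exact ⟨e, hl i⟩

end PrefixIdeal

namespace MinGradedFreeRes

variable {K σ : Type*} [Field K] {I : Ideal (MvPolynomial σ K)} (F : MinGradedFreeRes K σ I)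

/-- The free module `F_k` of the resolution. -/
abbrev free (k : ℕ) : Type _ := F.B k →₀ MvPolynomial σ K

/-- The submodule `J F_k` of the free module `F_k`. -/
noncomputable abbrev idealSMul (J : Ideal (MvPolynomial σ K)) (k : ℕ) :
    Submodule (MvPolynomial σ K) (F.free k) :=
  J • ⊤

/-- The vectors of `F_k` which are cycles modulo the ideal `J`; in `F_0` all vectors are cycles. -/
noncomputable def cycles (J : Ideal (MvPolynomial σ K)) : (k : ℕ) →
    Submodule (MvPolynomial σ K) (F.free k)
  | 0 => ⊤
  | k + 1 => (F.idealSMul J k).comap (F.d k)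

/-- The vectors of `F_k` which are boundaries modulo the ideal `J`. -/
noncomputable def boundaries (J : Ideal (MvPolynomial σ K)) (k : ℕ) :
    Submodule (MvPolynomial σ K) (F.free k) :=
  LinearMap.range (F.d k) ⊔ F.idealSMul J k

/-- The complex `F ⊗ S ⧸ J` is exact at all positions above `k`. -/
def ExactAbove (J : Ideal (MvPolynomial σ K)) (k : ℕ) : Prop :=
  ∀ q, k < q → F.cycles J q ≤ F.boundaries J q

/-- `ε` identifies the cokernel of `F_1 ⊗ S ⧸ J → F_0 ⊗ S ⧸ J` with `S ⧸ (I + J)`. -/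
def AugmentationExact (J : Ideal (MvPolynomial σ K)) : Prop :=
  ∀ u, F.ε u ∈ I ⊔ J ↔ u ∈ F.boundaries J 0

variable {F} {J : Ideal (MvPolynomial σ K)} {a : MvPolynomial σ K} {k : ℕ}

lemma d_d (k : ℕ) (v : F.free (k + 2)) : F.d k (F.d (k + 1) v) = 0 := by
  rw [← LinearMap.mem_ker, ← F.exact k]
  exact LinearMap.mem_range_self _ _

lemma ε_d_mem (v : F.free 1) : F.ε (F.d 0 v) ∈ I := by
  change F.d 0 v ∈ Submodule.comap F.ε (I : Submodule _ _)
  rw [← F.exact0]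
  exact LinearMap.mem_range_self _ _

lemma d_mem_idealSMul {v : F.free (k + 1)}
    (hv : v ∈ F.idealSMul J (k + 1)) :
    F.d k v ∈ F.idealSMul J k :=
  Submodule.smul_top_le_comap_smul_top J (F.d k) hv

lemma ε_mem_of_mem_idealSMul {u : F.free 0}
    (hu : u ∈ F.idealSMul J 0) : F.ε u ∈ J := by
  simpa using Submodule.smul_top_le_comap_smul_top J F.ε hu

lemma mem_boundaries_iff {u : F.free k} :
    u ∈ F.boundaries J k ↔
      ∃ v, u - F.d k v ∈ F.idealSMul J k := by
  simp only [boundaries, Submodule.mem_sup, LinearMap.mem_range, exists_exists_eq_and]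
  exact exists_congr fun v =>
    ⟨fun ⟨w, hw, h⟩ => by simpa [← h] using hw, fun h => ⟨_, h, add_sub_cancel _ _⟩⟩

lemma ε_mem_of_mem_boundaries {u : F.free 0} (hu : u ∈ F.boundaries J 0) : F.ε u ∈ I ⊔ J := by
  obtain ⟨v, hv⟩ := mem_boundaries_iff.1 hu
  simpa using Submodule.add_mem_sup (ε_d_mem v) (ε_mem_of_mem_idealSMul hv)

lemma boundaries_mono {J' : Ideal (MvPolynomial σ K)} (h : J ≤ J') (k : ℕ) :
    F.boundaries J k ≤ F.boundaries J' k :=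
  sup_le_sup_left (Submodule.smul_mono_left h) _

lemma exists_sub_smul_mem_of_mem_idealSMul_sup {u : F.free k}
    (hu : u ∈ F.idealSMul (J ⊔ Ideal.span {a}) k) : ∃ f, u - a • f ∈ F.idealSMul J k := by
  rw [idealSMul, Submodule.sup_smul, Submodule.ideal_span_singleton_smul] at hu
  obtain ⟨w, hw, _, ⟨f, -, rfl⟩, rfl⟩ := Submodule.mem_sup.1 hu
  exact ⟨f, by simpa using hw⟩

lemma smul_mem_idealSMul_sup (f : F.free k) : a • f ∈ F.idealSMul (J ⊔ Ideal.span {a}) k :=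
  Submodule.smul_mem_smul (Ideal.mem_sup_right (Ideal.mem_span_singleton_self a)) trivial

lemma mem_idealSMul_of_smul_mem (ha : IsSMulRegular (MvPolynomial σ K ⧸ J) a) {f : F.free k}
    (hf : a • f ∈ F.idealSMul J k) : f ∈ F.idealSMul J k := by
  rw [mem_ideal_smul_top_finsupp_iff] at hf ⊢
  exact fun b => mem_of_isSMulRegular_quotient_of_smul_mem ha (hf b)

lemma smul_mem_boundaries (f : F.free k) : a • f ∈ F.boundaries (J ⊔ Ideal.span {a}) k :=
  Submodule.mem_sup_right (smul_mem_idealSMul_sup f)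

lemma mem_boundaries_of_d_sub_smul_mem (hex : F.cycles J (k + 1) ≤ F.boundaries J (k + 1))
    {v : F.free (k + 1)} {u : F.free k} (hu : u ∈ F.boundaries J k)
    (huv : F.d k v - a • u ∈ F.idealSMul J k) :
    v ∈ F.boundaries (J ⊔ Ideal.span {a}) (k + 1) := by
  obtain ⟨g, hg⟩ := mem_boundaries_iff.1 hu
  have hcycle : v - a • g ∈ F.cycles J (k + 1) := by
    change F.d k (v - a • g) ∈ F.idealSMul J k
    convert add_mem huv (Submodule.smul_mem _ a hg) using 1
    rw [map_sub, map_smul]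
    module
  simpa using add_mem (boundaries_mono le_sup_left _ (hex hcycle)) (smul_mem_boundaries (a := a) g)

lemma ExactAbove.sup_span_singleton (hex : F.ExactAbove J k)
    (ha : IsSMulRegular (MvPolynomial σ K ⧸ J) a) :
    F.ExactAbove (J ⊔ Ideal.span {a}) (k + 1) := by
  intro q hq v hv
  obtain ⟨q, rfl⟩ : ∃ p, q = p + 2 := ⟨q - 2, by omega⟩
  obtain ⟨u, hu⟩ := exists_sub_smul_mem_of_mem_idealSMul_sup hv
  refine mem_boundaries_of_d_sub_smul_mem (hex _ (by omega)) (hex _ (by omega) ?_) hu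
  have hdu := d_mem_idealSMul hu
  rw [map_sub, d_d, zero_sub, map_smul, neg_mem_iff] at hdu
  exact mem_idealSMul_of_smul_mem ha hdu

lemma exactAbove_bot : F.ExactAbove ⊥ 0 := by
  intro q hq v hv
  obtain ⟨q, rfl⟩ := Nat.exists_eq_succ_of_ne_zero hq.ne'
  refine Submodule.mem_sup_left ?_
  rw [F.exact q]
  simpa [cycles] using hv

lemma augmentationExact_bot : F.AugmentationExact ⊥ := by
  intro u
  rw [boundaries, F.exact0, idealSMul, Submodule.bot_smul, sup_bot_eq, sup_bot_eq]
  rfl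

lemma AugmentationExact.exactAbove_zero_sup_span_singleton (h0 : F.AugmentationExact J)
    (hex : F.ExactAbove J 0) (ha : IsSMulRegular (MvPolynomial σ K ⧸ J) a)
    (haI : IsSMulRegular (MvPolynomial σ K ⧸ I ⊔ J) a) :
    F.ExactAbove (J ⊔ Ideal.span {a}) 0 := by
  intro q hq v hv
  obtain rfl | hq' := (Nat.one_le_iff_ne_zero.2 hq.ne').eq_or_lt
  · obtain ⟨u, hu⟩ := exists_sub_smul_mem_of_mem_idealSMul_sup hv
    refine mem_boundaries_of_d_sub_smul_mem (hex 1 one_pos) ((h0 u).1 ?_) hu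
    refine mem_of_isSMulRegular_quotient_of_smul_mem haI ?_
    simpa using sub_mem (Submodule.mem_sup_left (T := J) (ε_d_mem v))
      (Submodule.mem_sup_right (S := I) (ε_mem_of_mem_idealSMul hu))
  · exact hex.sup_span_singleton ha q hq' hv

lemma AugmentationExact.sup_span_singleton (h0 : F.AugmentationExact J) :
    F.AugmentationExact (J ⊔ Ideal.span {a}) := by
  refine fun u => ⟨fun hu => ?_, ε_mem_of_mem_boundaries⟩
  rw [← sup_assoc] at hu
  obtain ⟨j, hj, s, hs, hjs⟩ := Submodule.mem_sup.1 hu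
  obtain ⟨s, rfl⟩ := Ideal.mem_span_singleton'.1 hs
  obtain ⟨t, ht⟩ := F.surj s
  have hsub : u - a • t ∈ F.boundaries J 0 := by
    rw [← h0, map_sub, map_smul, ← hjs, smul_eq_mul]
    convert sub_mem hj (Ideal.mul_mem_left _ a (Submodule.mem_sup_left (T := J) ht)) using 1
    ring
  simpa using add_mem (boundaries_mono le_sup_left _ hsub) (smul_mem_boundaries (a := a) t)

lemma mem_boundaries_iff_of_smul_sub_d_mem (hex : F.ExactAbove J k)
    (ha : IsSMulRegular (MvPolynomial σ K ⧸ J) a) {u : F.free k} {v : F.free (k + 1)}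
    (huv : a • u - F.d k v ∈ F.idealSMul J k) :
    u ∈ F.boundaries J k ↔ v ∈ F.boundaries (J ⊔ Ideal.span {a}) (k + 1) := by
  refine ⟨fun hu => mem_boundaries_of_d_sub_smul_mem (hex _ k.lt_succ_self) hu ?_, fun hv => ?_⟩
  · rwa [← neg_mem_iff, neg_sub]
  · obtain ⟨w, hw⟩ := mem_boundaries_iff.1 hv
    obtain ⟨f, hf⟩ := exists_sub_smul_mem_of_mem_idealSMul_sup hw
    have hdf := d_mem_idealSMul hf
    rw [map_sub, map_sub, d_d, map_smul, sub_zero] at hdf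
    refine mem_boundaries_iff.2 ⟨f, mem_idealSMul_of_smul_mem ha ?_⟩
    simpa [smul_sub] using add_mem huv hdf

lemma mem_cycles_of_smul_sub_d_mem (ha : IsSMulRegular (MvPolynomial σ K ⧸ J) a)
    {u : F.free k} {v : F.free (k + 1)} (huv : a • u - F.d k v ∈ F.idealSMul J k) :
    u ∈ F.cycles J k := by
  cases k with
  | zero => trivial
  | succ k =>
    refine mem_idealSMul_of_smul_mem (k := k) ha ?_
    simpa [d_d] using d_mem_idealSMul huv

lemma mem_cycles_sup_of_smul_sub_d_mem {u : F.free k} {v : F.free (k + 1)}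
    (huv : a • u - F.d k v ∈ F.idealSMul J k) : v ∈ F.cycles (J ⊔ Ideal.span {a}) (k + 1) := by
  change F.d k v ∈ F.idealSMul (J ⊔ Ideal.span {a}) k
  simpa using sub_mem (smul_mem_idealSMul_sup (a := a) u) (Submodule.smul_mono_left le_sup_left huv)

lemma d_single_mem_gradedPiece (b : F.B (k + 1)) :
    F.d k (Finsupp.single b 1) ∈ gradedPiece K σ (F.deg k) (F.deg (k + 1) b) :=
  fun c m hm => F.homog k b c m (mem_support_iff.2 hm)

attribute [local instance] MvPolynomial.gradedAlgebra

lemma exists_smul_sub_d_mem_of_smul_mem_boundaries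
    (hJ : J.IsHomogeneous (homogeneousSubmodule σ K)) (ha : a.IsHomogeneous 1) {j : ℕ}
    {u : F.free k} (hu : u ∈ gradedPiece K σ (F.deg k) j) (hau : a • u ∈ F.boundaries J k) :
    ∃ v ∈ gradedPiece K σ (F.deg (k + 1)) (j + 1), a • u - F.d k v ∈ F.idealSMul J k := by
  obtain ⟨v, hv⟩ := mem_boundaries_iff.1 hau
  refine ⟨_, gradedProj_mem (j + 1) v, ?_⟩
  have hproj := gradedProj_mem_ideal_smul_top (deg := F.deg k) hJ (j + 1) hv
  rwa [map_sub, gradedProj_linearForm_smul ha, gradedProj_eq_self hu,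
    gradedProj_map _ d_single_mem_gradedPiece] at hproj

lemma exists_smul_sub_d_mem_of_mem_cycles
    (hJ : J.IsHomogeneous (homogeneousSubmodule σ K)) (ha : a.IsHomogeneous 1) {j : ℕ}
    {v : F.free (k + 1)} (hv : v ∈ gradedPiece K σ (F.deg (k + 1)) (j + 1))
    (hcycle : v ∈ F.cycles (J ⊔ Ideal.span {a}) (k + 1)) :
    ∃ u ∈ gradedPiece K σ (F.deg k) j, a • u - F.d k v ∈ F.idealSMul J k := by
  obtain ⟨u, hu⟩ := exists_sub_smul_mem_of_mem_idealSMul_sup hcycle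
  refine ⟨_, gradedProj_mem j u, ?_⟩
  have hproj := gradedProj_mem_ideal_smul_top (deg := F.deg k) hJ (j + 1) hu
  rwa [map_sub, gradedProj_linearForm_smul ha, gradedProj_map _ d_single_mem_gradedPiece,
    gradedProj_eq_self hv, ← neg_mem_iff, neg_sub] at hproj

-- The isomorphism sends the class of `u` to the class of `v` when `a • u ≡ d v` modulo `J`.
lemma socleRank_boundaries_succ (hJ : J.IsHomogeneous (homogeneousSubmodule σ K))
    (hex : F.ExactAbove J k) (ha : a.IsHomogeneous 1)
    (har : IsSMulRegular (MvPolynomial σ K ⧸ J) a) (j : ℕ) :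
    socleRank (F.boundaries J k)
        (gradedPiece K σ (F.deg k) j ⊓ (F.cycles J k).restrictScalars K) =
      socleRank (F.boundaries (J ⊔ Ideal.span {a}) (k + 1))
        (gradedPiece K σ (F.deg (k + 1)) (j + 1) ⊓
          (F.cycles (J ⊔ Ideal.span {a}) (k + 1)).restrictScalars K) := by
  let R : Submodule (MvPolynomial σ K) (F.free k × F.free (k + 1)) := (F.idealSMul J k).comap
    (a • LinearMap.fst _ _ _ - F.d k ∘ₗ LinearMap.snd _ _ _)
  refine socleRank_eq_of_relation R
    (fun p hp => mem_boundaries_iff_of_smul_sub_d_mem (u := p.1) hex har hp)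
    (fun u hsocle hu => ?_) (fun v _ hv => ?_)
  · obtain ⟨v, hv, huv⟩ := exists_smul_sub_d_mem_of_smul_mem_boundaries hJ ha hu.1
      (hsocle a (mem_idealOfVars_of_isHomogeneous_one ha))
    exact ⟨v, ⟨hv, mem_cycles_sup_of_smul_sub_d_mem huv⟩, huv⟩
  · obtain ⟨u, hu, huv⟩ := exists_smul_sub_d_mem_of_mem_cycles hJ ha hv.1 hv.2
    exact ⟨u, ⟨hu, mem_cycles_of_smul_sub_d_mem har huv⟩, huv⟩

lemma exists_ε_sub_mem (hI : I.IsHomogeneous (homogeneousSubmodule σ K)) {j : ℕ}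
    {f : MvPolynomial σ K} (hf : f.IsHomogeneous j) :
    ∃ u ∈ gradedPiece K σ (F.deg 0) j, F.ε u - f ∈ I := by
  obtain ⟨t, ht⟩ := F.surj f
  refine ⟨_, gradedProj_mem j t, ?_⟩
  have hproj := homogeneousComponent_mem_of_mem hI ht j
  rwa [map_sub, homogeneousComponent_map F.ε F.ε_homog, homogeneousComponent_eq_self hf] at hproj

lemma ε_mem_homogeneousSubmodule {j : ℕ} {u : F.free 0}
    (hu : u ∈ gradedPiece K σ (F.deg 0) j) : F.ε u ∈ homogeneousSubmodule σ K j := by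
  rw [← gradedProj_eq_self hu, ← homogeneousComponent_map F.ε F.ε_homog]
  exact homogeneousComponent_isHomogeneous j _

lemma socleRank_boundaries_zero (hI : I.IsHomogeneous (homogeneousSubmodule σ K))
    (h0 : F.AugmentationExact J) (j : ℕ) :
    socleRank (F.boundaries J 0)
        (gradedPiece K σ (F.deg 0) j ⊓ (F.cycles J 0).restrictScalars K) =
      socleRank (I ⊔ J) (homogeneousSubmodule σ K j) := by
  refine socleRank_eq_of_relation (Submodule.comap
    (F.ε ∘ₗ LinearMap.fst _ (F.free 0) (MvPolynomial σ K) - LinearMap.snd _ _ _) (I ⊔ J))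
    (fun ⟨u, f⟩ huf => ?_) (fun u _ hu => ⟨F.ε u, ε_mem_homogeneousSubmodule hu.1, ?_⟩)
    (fun f _ hf => ?_)
  · rw [← h0]
    exact ⟨fun h => (Submodule.sub_mem_iff_right _ h).1 huf,
      fun h => (Submodule.sub_mem_iff_left _ h).1 huf⟩
  · simp
  · obtain ⟨u, hu, huf⟩ := exists_ε_sub_mem (F := F) hI hf
    exact ⟨u, ⟨hu, trivial⟩, Submodule.mem_sup_left huf⟩

lemma d_mem_idealOfVars_smul_top (v : F.free (k + 1)) :
    F.d k v ∈ F.idealSMul (idealOfVars σ K) k := by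
  induction v using Finsupp.induction_linear with
  | zero => simp
  | add v w hv hw => simpa using add_mem hv hw
  | single b s =>
    rw [← mul_one s, ← smul_eq_mul, ← Finsupp.smul_single, map_smul]
    refine Submodule.smul_mem _ _ (mem_ideal_smul_top_finsupp_iff.2 fun c => ?_)
    exact mem_idealOfVars_iff.2 (F.minimal k b c)

lemma cycles_idealOfVars (k : ℕ) : F.cycles (idealOfVars σ K) k = ⊤ := by
  cases k with
  | zero => rfl
  | succ k => exact eq_top_iff.2 fun v _ => d_mem_idealOfVars_smul_top v

lemma mem_boundaries_idealOfVars_iff {u : F.free k} :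
    u ∈ F.boundaries (idealOfVars σ K) k ↔ ∀ b, coeff 0 (u b) = 0 := by
  have hle : LinearMap.range (F.d k) ≤ F.idealSMul (idealOfVars σ K) k := by
    rintro _ ⟨v, rfl⟩
    exact d_mem_idealOfVars_smul_top v
  rw [boundaries, sup_eq_right.2 hle, mem_ideal_smul_top_finsupp_iff]
  simp only [mem_idealOfVars_iff]

lemma socle_boundaries_idealOfVars (k : ℕ) : socle (F.boundaries (idealOfVars σ K) k) = ⊤ :=
  eq_top_iff.2 fun _ _ _ hs => Submodule.mem_sup_right (Submodule.smul_mem_smul hs trivial)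

/-- The constant terms of the coordinates of `u ∈ F_k` at the basis vectors of degree `j`. -/
noncomputable def constantTerms (F : MinGradedFreeRes K σ I) (k j : ℕ) :
    F.free k →ₗ[K] ({b : F.B k // F.deg k b = j} → K) :=
  LinearMap.pi fun b => (lcoeff K 0).comp (Finsupp.lapply b.1)

lemma constantTerms_eq_zero_iff {j : ℕ} {u : F.free k}
    (hu : u ∈ gradedPiece K σ (F.deg k) j) :
    F.constantTerms k j u = 0 ↔ u ∈ F.boundaries (idealOfVars σ K) k := by
  rw [mem_boundaries_idealOfVars_iff, funext_iff, Subtype.forall]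
  refine forall_congr' fun b => ⟨fun h => ?_, fun h _ => h⟩
  by_contra hb
  exact hb (h (by simpa [mdeg] using hu b 0 hb))

lemma map_constantTerms (F : MinGradedFreeRes K σ I) (k j : ℕ) :
    (gradedPiece K σ (F.deg k) j).map (F.constantTerms k j) = ⊤ := by
  classical
  have := F.finB k
  refine eq_top_iff.2 fun w _ => ?_
  let u : F.free k := Finsupp.equivFunOnFinite.symm fun b =>
    if hb : F.deg k b = j then C (w ⟨b, hb⟩) else 0
  refine ⟨u, fun b m hm => ?_, funext fun b => ?_⟩
  · change coeff m (if hb : F.deg k b = j then C (w ⟨b, hb⟩) else 0) ≠ 0 at hm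
    split_ifs at hm with hb
    · obtain rfl : 0 = m := of_not_not fun h => hm (by rw [coeff_C, if_neg h])
      simpa [mdeg] using hb
    · exact absurd (coeff_zero m) hm
  · change coeff 0 (if hb : F.deg k b = j then C (w ⟨b, hb⟩) else 0) = w b
    rw [dif_pos b.2, coeff_zero_C]

lemma socleRank_boundaries_idealOfVars (k j : ℕ) :
    socleRank (F.boundaries (idealOfVars σ K) k)
        (gradedPiece K σ (F.deg k) j ⊓ (F.cycles (idealOfVars σ K) k).restrictScalars K) =
      F.betti k j := by
  have := F.finB k
  cases nonempty_fintype {b : F.B k // F.deg k b = j}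
  rw [socleRank, socle_boundaries_idealOfVars, cycles_idealOfVars, Submodule.restrictScalars_top,
    inf_top_eq, top_inf_eq, finrank_map_eq_of_ker_eq_on _ (F.constantTerms k j) _ fun u hu => ?_,
    map_constantTerms, finrank_top, Module.finrank_fintype_fun_eq_card, betti,
    Nat.card_eq_fintype_card]
  rw [constantTerms_eq_zero_iff hu]
  exact Submodule.Quotient.mk_eq_zero _

section RegularSequence

variable (F) {l : ℕ → MvPolynomial σ K} {d : ℕ}

lemma augmentationExact_prefixIdeal (l : ℕ → MvPolynomial σ K) (d : ℕ) :
    F.AugmentationExact (prefixIdeal l d) := by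
  induction d with
  | zero => rw [prefixIdeal_zero]; exact augmentationExact_bot
  | succ d ih => rw [prefixIdeal_succ]; exact ih.sup_span_singleton

lemma exactAbove_prefixIdeal
    (hreg : ∀ k < d, IsSMulRegular (MvPolynomial σ K ⧸ prefixIdeal l k) (l k))
    (hregI : ∀ k < d, IsSMulRegular (MvPolynomial σ K ⧸ I ⊔ prefixIdeal l k) (l k)) :
    F.ExactAbove (prefixIdeal l d) 0 := by
  induction d with
  | zero => rw [prefixIdeal_zero]; exact exactAbove_bot
  | succ d ih =>
    rw [prefixIdeal_succ]
    exact (F.augmentationExact_prefixIdeal l d).exactAbove_zero_sup_span_singleton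
      (ih (fun k hk => hreg k (by omega)) fun k hk => hregI k (by omega))
      (hreg d d.lt_succ_self) (hregI d d.lt_succ_self)

lemma exactAbove_prefixIdeal_add {k : ℕ} (h0 : F.ExactAbove (prefixIdeal l d) 0)
    (hreg : ∀ i < d + k, IsSMulRegular (MvPolynomial σ K ⧸ prefixIdeal l i) (l i)) :
    F.ExactAbove (prefixIdeal l (d + k)) k := by
  induction k with
  | zero => exact h0
  | succ k ih =>
    rw [← add_assoc, prefixIdeal_succ]
    exact (ih fun i hi => hreg i (by omega)).sup_span_singleton (hreg _ (by omega))

lemma socleRank_boundaries_prefixIdeal_add (hl : ∀ k, (l k).IsHomogeneous 1) {k : ℕ}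
    (h0 : F.ExactAbove (prefixIdeal l d) 0)
    (hreg : ∀ i < d + k, IsSMulRegular (MvPolynomial σ K ⧸ prefixIdeal l i) (l i)) (j : ℕ) :
    socleRank (F.boundaries (prefixIdeal l (d + k)) k)
        (gradedPiece K σ (F.deg k) (k + j) ⊓
          (F.cycles (prefixIdeal l (d + k)) k).restrictScalars K) =
      socleRank (F.boundaries (prefixIdeal l d) 0)
        (gradedPiece K σ (F.deg 0) j ⊓ (F.cycles (prefixIdeal l d) 0).restrictScalars K) := by
  induction k with
  | zero => rw [zero_add]; rfl
  | succ k ih =>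
    have hreg' := fun i (hi : i < d + k) => hreg i (by omega)
    rw [← ih hreg', socleRank_boundaries_succ (isHomogeneous_prefixIdeal hl _)
      (F.exactAbove_prefixIdeal_add h0 hreg') (hl (d + k)) (hreg _ (by omega)),
      ← prefixIdeal_succ, add_right_comm]
    rfl

theorem betti_eq_socleRank (hI : I.IsHomogeneous (homogeneousSubmodule σ K))
    (hl : ∀ k, (l k).IsHomogeneous 1) {n : ℕ}
    (hreg : ∀ k < d + n, IsSMulRegular (MvPolynomial σ K ⧸ prefixIdeal l k) (l k))
    (hvars : prefixIdeal l (d + n) = idealOfVars σ K)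
    (hregI : ∀ k < d, IsSMulRegular (MvPolynomial σ K ⧸ I ⊔ prefixIdeal l k) (l k)) (j : ℕ) :
    F.betti n (n + j) = socleRank (I ⊔ prefixIdeal l d) (homogeneousSubmodule σ K j) := by
  have h0 := F.exactAbove_prefixIdeal (fun k hk => hreg k (by omega)) hregI
  rw [← F.socleRank_boundaries_idealOfVars, ← hvars,
    F.socleRank_boundaries_prefixIdeal_add hl h0 hreg,
    socleRank_boundaries_zero hI (F.augmentationExact_prefixIdeal l d)]

end RegularSequence

end MinGradedFreeRes

section Existence

variable {K σ B : Type*} [Field K] {deg : B → ℕ}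

lemma exists_sum_gradedProj_eq (u : B →₀ MvPolynomial σ K) :
    ∃ T : Finset ℕ, ∑ j ∈ T, gradedProj K σ deg j u = u := by
  classical
  let T := u.support.biUnion fun b => (u b).support.image fun m => mdeg m + deg b
  refine ⟨T, ?_⟩
  ext b m
  simp only [Finsupp.finsetSum_apply, coeff_sum, gradedProj_apply, coeff_shiftedComponent,
    Finset.sum_ite_eq, ite_eq_left_iff]
  refine fun hT => of_not_not fun hne => hT ?_
  replace hne : coeff m (u b) ≠ 0 := Ne.symm hne
  refine Finset.mem_biUnion.2 ⟨b, Finsupp.mem_support_iff.2 fun h0 => hne (by simp [h0]), ?_⟩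
  exact Finset.mem_image_of_mem _ (mem_support_iff.2 hne)

lemma span_gradedPiece_inter_eq {Z : Submodule (MvPolynomial σ K) (B →₀ MvPolynomial σ K)}
    (hZ : ∀ j, ∀ u ∈ Z, gradedProj K σ deg j u ∈ Z) :
    Submodule.span (MvPolynomial σ K) {u | u ∈ Z ∧ ∃ e, u ∈ gradedPiece K σ deg e} = Z := by
  refine le_antisymm (Submodule.span_le.2 fun u hu => hu.1) fun u hu => ?_
  obtain ⟨T, hT⟩ := exists_sum_gradedProj_eq (deg := deg) u
  rw [← hT]
  exact Submodule.sum_mem _ fun j _ => Submodule.subset_span ⟨hZ j u hu, j, gradedProj_mem j u⟩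

/-- `v` is a finite sequence of homogeneous generators of the submodule `Z` of the graded free
module with basis degrees `deg`. -/
def IsHomogeneousGenerators (deg : B → ℕ)
    (Z : Submodule (MvPolynomial σ K) (B →₀ MvPolynomial σ K)) {r : ℕ}
    (v : Fin r → B →₀ MvPolynomial σ K) : Prop :=
  Submodule.span (MvPolynomial σ K) (Set.range v) = Z ∧ ∀ i, ∃ e, v i ∈ gradedPiece K σ deg e

lemma exists_isHomogeneousGenerators [Finite σ] [Finite B]
    {Z : Submodule (MvPolynomial σ K) (B →₀ MvPolynomial σ K)}
    (hZ : ∀ j, ∀ u ∈ Z, gradedProj K σ deg j u ∈ Z) :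
    ∃ (r : ℕ) (v : Fin r → B →₀ MvPolynomial σ K), IsHomogeneousGenerators deg Z v := by
  have hspan := span_gradedPiece_inter_eq hZ
  have hfg : Z.FG := IsNoetherian.noetherian Z
  obtain ⟨G, hGsub, hG⟩ := Submodule.fg_span_iff_fg_span_finset_subset _ |>.1 (hspan ▸ hfg)
  refine ⟨G.card, fun i => G.equivFin.symm i, ?_, fun i => (hGsub (G.equivFin.symm i).2).2⟩
  rw [← hspan, hG]
  congr 1
  ext u
  exact ⟨fun ⟨i, hi⟩ => hi ▸ (G.equivFin.symm i).2, fun hu => ⟨G.equivFin ⟨u, hu⟩, by simp⟩⟩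

lemma IsHomogeneousGenerators.comp_succAbove {r : ℕ}
    {Z : Submodule (MvPolynomial σ K) (B →₀ MvPolynomial σ K)}
    {v : Fin (r + 1) → B →₀ MvPolynomial σ K} (hv : IsHomogeneousGenerators deg Z v)
    {b : Fin (r + 1)} (hb : v b ∈ Submodule.span (MvPolynomial σ K) (Set.range (v ∘ b.succAbove))) :
    IsHomogeneousGenerators deg Z (v ∘ b.succAbove) := by
  refine ⟨le_antisymm ?_ ?_, fun i => hv.2 _⟩ <;> rw [← hv.1]
  · exact Submodule.span_mono (Set.range_comp_subset_range _ _)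
  · rw [Submodule.span_le]
    rintro _ ⟨i, rfl⟩
    rcases b.eq_self_or_eq_succAbove i with rfl | ⟨i, rfl⟩
    · exact hb
    · exact Submodule.subset_span ⟨i, rfl⟩

lemma mem_span_range_comp_succAbove {r : ℕ} {v : Fin (r + 1) → B →₀ MvPolynomial σ K}
    {w : Fin (r + 1) →₀ MvPolynomial σ K}
    (hw : Finsupp.linearCombination (MvPolynomial σ K) v w = 0) {b : Fin (r + 1)}
    (hb : IsUnit (w b)) :
    v b ∈ Submodule.span (MvPolynomial σ K) (Set.range (v ∘ b.succAbove)) := by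
  rw [Finsupp.linearCombination_apply, Finsupp.sum_fintype _ _ (by simp),
    Fin.sum_univ_succAbove _ b] at hw
  rw [← Submodule.smul_mem_iff_of_isUnit _ hb, eq_neg_of_add_eq_zero_left hw]
  exact Submodule.neg_mem _ (Submodule.sum_mem _ fun i _ =>
    Submodule.smul_mem _ _ (Submodule.subset_span ⟨i, rfl⟩))

-- A constant coefficient of a homogeneous syzygy makes the corresponding generator redundant.
lemma exists_minimal_generators [Finite σ] [Finite B]
    {Z : Submodule (MvPolynomial σ K) (B →₀ MvPolynomial σ K)}
    (hZ : ∀ j, ∀ u ∈ Z, gradedProj K σ deg j u ∈ Z) :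
    ∃ (r : ℕ) (v : Fin r → B →₀ MvPolynomial σ K), IsHomogeneousGenerators deg Z v ∧
      ∀ u, Finsupp.linearCombination (MvPolynomial σ K) v u = 0 → ∀ b, coeff 0 (u b) = 0 := by
  classical
  have hex := exists_isHomogeneousGenerators hZ
  obtain ⟨v, hv⟩ := Nat.find_spec hex
  have hmin : ∀ r < Nat.find hex, ¬ ∃ v : Fin r → B →₀ MvPolynomial σ K,
    IsHomogeneousGenerators deg Z v := fun r => Nat.find_min hex
  generalize Nat.find hex = r at v hv hmin
  refine ⟨r, v, hv, fun u hu b => by_contra fun hb => ?_⟩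
  cases r with
  | zero => exact b.elim0
  | succ r =>
    choose e he using hv.2
    have hsyz : Finsupp.linearCombination (MvPolynomial σ K) v (gradedProj K σ e (e b) u) = 0 := by
      rw [← gradedProj_map (deg := deg) _ (fun i => by simpa using he i), hu, map_zero]
    have hunit : IsUnit (gradedProj K σ e (e b) u b) := by
      rw [gradedProj_apply, shiftedComponent, if_pos le_rfl, Nat.sub_self,
        homogeneousComponent_zero]
      exact (IsUnit.mk0 _ hb).map C
    exact hmin r r.lt_succ_self
      ⟨_, hv.comp_succAbove (mem_span_range_comp_succAbove hsyz hunit)⟩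

/-- A graded submodule, without constant terms, of a graded free module of finite rank: what is
left to be resolved at a stage of the construction of a minimal graded free resolution. -/
structure GradedSyzygies (K σ : Type*) [Field K] where
  rank : ℕ
  deg : Fin rank → ℕ
  carrier : Submodule (MvPolynomial σ K) (Fin rank →₀ MvPolynomial σ K)
  gradedProj_mem : ∀ j, ∀ u ∈ carrier, gradedProj K σ deg j u ∈ carrier
  coeff_zero : ∀ u ∈ carrier, ∀ b, coeff 0 (u b) = 0

lemma GradedSyzygies.exists_next [Finite σ] (T : GradedSyzygies K σ) :
    ∃ (T' : GradedSyzygies K σ) (f : (Fin T'.rank →₀ MvPolynomial σ K) →ₗ[MvPolynomial σ K]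
      (Fin T.rank →₀ MvPolynomial σ K)), LinearMap.range f = T.carrier ∧
        LinearMap.ker f = T'.carrier ∧
        ∀ b, f (Finsupp.single b 1) ∈ gradedPiece K σ T.deg (T'.deg b) := by
  obtain ⟨r, v, hv, hmin⟩ := exists_minimal_generators T.gradedProj_mem
  choose e he using hv.2
  let f := Finsupp.linearCombination (MvPolynomial σ K) v
  have hf (b : Fin r) : f (Finsupp.single b 1) ∈ gradedPiece K σ T.deg (e b) := by
    simpa [f] using he b
  refine ⟨⟨r, e, LinearMap.ker f, fun j u hu => ?_, hmin⟩, f, ?_, rfl, hf⟩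
  · rw [LinearMap.mem_ker, ← gradedProj_map f hf, LinearMap.mem_ker.1 hu, map_zero]
  · rw [Finsupp.range_linearCombination, hv.1]

attribute [local instance] MvPolynomial.gradedAlgebra

lemma isHomogeneous_lapply_single (b : Fin 1) :
    (Finsupp.lapply (R := MvPolynomial σ K) 0
      (Finsupp.single b (1 : MvPolynomial σ K))).IsHomogeneous 0 := by
  rw [Subsingleton.elim b 0]
  simpa using isHomogeneous_one σ K

/-- A proper homogeneous ideal, as a submodule of the free module of rank one. -/
noncomputable def GradedSyzygies.ofIdeal {I : Ideal (MvPolynomial σ K)}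
    (hI : I.IsHomogeneous (homogeneousSubmodule σ K)) (hI' : I ≤ idealOfVars σ K) :
    GradedSyzygies K σ where
  rank := 1
  deg := fun _ => 0
  carrier := Submodule.comap (Finsupp.lapply 0) I
  gradedProj_mem j u hu := by
    rw [Submodule.mem_comap, ← homogeneousComponent_map _ isHomogeneous_lapply_single]
    exact homogeneousComponent_mem_of_mem hI hu j
  coeff_zero u hu b := by
    rw [Subsingleton.elim b 0]
    exact mem_idealOfVars_iff.1 (hI' hu)

theorem nonempty_minGradedFreeRes [Finite σ] {I : Ideal (MvPolynomial σ K)}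
    (hI : I.IsHomogeneous (homogeneousSubmodule σ K)) (hI' : I ≤ idealOfVars σ K) :
    Nonempty (MinGradedFreeRes K σ I) := by
  choose next f hrange hker hf using GradedSyzygies.exists_next (K := K) (σ := σ)
  let T (k : ℕ) : GradedSyzygies K σ := next^[k] (GradedSyzygies.ofIdeal hI hI')
  have hT (k : ℕ) : T (k + 1) = next (T k) := Function.iterate_succ_apply' next k _
  have hstage (k : ℕ) : ∃ g : (Fin (T (k + 1)).rank →₀ MvPolynomial σ K) →ₗ[MvPolynomial σ K]
      (Fin (T k).rank →₀ MvPolynomial σ K), LinearMap.range g = (T k).carrier ∧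
        LinearMap.ker g = (T (k + 1)).carrier ∧
        ∀ b, g (Finsupp.single b 1) ∈ gradedPiece K σ (T k).deg ((T (k + 1)).deg b) := by
    rw [hT]
    exact ⟨f _, hrange _, hker _, hf _⟩
  choose g hgrange hgker hghom using hstage
  have hsurj (s : MvPolynomial σ K) :
      ∃ t, Finsupp.lapply (R := MvPolynomial σ K) (0 : Fin 1) t - s ∈ I :=
    ⟨Finsupp.single 0 s, by simp⟩
  exact ⟨{
    B := fun k => Fin (T k).rank
    finB := fun k => inferInstance
    deg := fun k => (T k).deg
    d := g
    ε := Finsupp.lapply (0 : Fin 1)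
    ε_homog := isHomogeneous_lapply_single
    surj := hsurj
    exact0 := hgrange 0
    exact := fun k => (hgrange (k + 1)).trans (hgker k).symm
    homog := fun k b c m hm => hghom k b c m (mem_support_iff.1 hm)
    minimal := fun k b c => (T k).coeff_zero _ (hgrange k ▸ LinearMap.mem_range_self _ _) c }⟩

end Existence

section LinearForms

variable {K σ : Type*} [Field K]

lemma injective_of_surjective_ringHom {R : Type*} [CommRing R] [IsNoetherianRing R] {φ : R →+* R}
    (hφ : Function.Surjective φ) : Function.Injective φ := by
  have hiter (k : ℕ) (f : R) : (φ ^ k) f = φ^[k] f := by rw [RingHom.coe_pow]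
  obtain ⟨k, hk⟩ := monotone_stabilizes_iff_noetherian.2 (inferInstance : IsNoetherian R R)
    ⟨fun k => RingHom.ker (φ ^ k), monotone_nat_of_le_succ fun k f hf => by
      rw [RingHom.mem_ker, hiter] at hf ⊢
      rw [Function.iterate_succ_apply', hf, map_zero]⟩
  refine (injective_iff_map_eq_zero φ).2 fun f hf => ?_
  obtain ⟨g, rfl⟩ := hφ.iterate k f
  have hg : g ∈ RingHom.ker (φ ^ (k + 1)) := by
    rwa [RingHom.mem_ker, hiter, Function.iterate_succ_apply']
  rw [← hiter]
  exact (hk (k + 1) k.le_succ).ge hg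

lemma isSMulRegular_quotient_span_X_image {s : Set σ} {i : σ} (hi : i ∉ s) :
    IsSMulRegular (MvPolynomial σ K ⧸ Ideal.span (X '' s : Set (MvPolynomial σ K)))
      (X i : MvPolynomial σ K) := by
  classical
  refine (isSMulRegular_quotient_iff_mem_of_smul_mem _ _).2 fun f hf => ?_
  rw [smul_eq_mul, mul_comm, mem_ideal_span_X_image] at hf
  refine mem_ideal_span_X_image.2 fun m hm => ?_
  obtain ⟨j, hjs, hj⟩ := hf (m + Finsupp.single i 1) (by simpa [coeff_mul_X] using hm)
  have hne : i ≠ j := fun h => hi (h ▸ hjs)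
  exact ⟨j, hjs, by simpa [Finsupp.single_apply, hne] using hj⟩

lemma isSMulRegular_map_of_bijective {R R' : Type*} [CommRing R] [CommRing R'] {φ : R →+* R'}
    (hφ : Function.Bijective φ) {J : Ideal R} {a : R} (ha : IsSMulRegular (R ⧸ J) a) :
    IsSMulRegular (R' ⧸ J.map φ) (φ a) := by
  have hJ : ∀ f, φ f ∈ J.map φ ↔ f ∈ J := fun f => by
    rw [← Ideal.mem_comap, Ideal.comap_map_of_bijective φ hφ]
  refine (isSMulRegular_quotient_iff_mem_of_smul_mem _ _).2 fun f hf => ?_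
  obtain ⟨g, rfl⟩ := hφ.surjective f
  rw [smul_eq_mul, ← map_mul, hJ] at hf
  exact (hJ g).2 (mem_of_isSMulRegular_quotient_of_smul_mem ha hf)

lemma isSMulRegular_prefixIdeal {N : ℕ} {l : ℕ → MvPolynomial (Fin N) K}
    (hl : ∀ i, X i ∈ Submodule.span K (l '' Set.Iio N)) {k : ℕ} (hk : k < N) :
    IsSMulRegular (MvPolynomial (Fin N) K ⧸ prefixIdeal l k) (l k) := by
  let φ : MvPolynomial (Fin N) K →ₐ[K] MvPolynomial (Fin N) K := aeval fun i => l i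
  have hmem : ∀ f ∈ Submodule.span K (l '' Set.Iio N), f ∈ φ.range := by
    refine fun f hf => Submodule.span_le (p := Subalgebra.toSubmodule φ.range).2 ?_ hf
    rintro _ ⟨i, hi, rfl⟩
    exact ⟨X ⟨i, hi⟩, by simp [φ]⟩
  have hsurj : Function.Surjective φ := by
    rw [← AlgHom.range_eq_top, eq_top_iff, ← adjoin_range_X, Algebra.adjoin_le_iff]
    rintro _ ⟨i, rfl⟩
    exact hmem _ (hl i)
  have hbij : Function.Bijective φ.toRingHom :=
    ⟨injective_of_surjective_ringHom hsurj, hsurj⟩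
  have himage : φ.toRingHom '' (X '' {i : Fin N | (i : ℕ) < k}) = l '' Set.Iio k := by
    ext f
    constructor
    · rintro ⟨_, ⟨i, hi, rfl⟩, rfl⟩
      exact ⟨i, hi, by simp [φ]⟩
    · rintro ⟨i, hi, rfl⟩
      exact ⟨_, ⟨⟨i, hi.trans hk⟩, hi, rfl⟩, by simp [φ]⟩
  have hreg := isSMulRegular_map_of_bijective hbij
    (isSMulRegular_quotient_span_X_image (K := K) (s := {i : Fin N | (i : ℕ) < k})
      (i := ⟨k, hk⟩) (lt_irrefl k))
  have hlk : φ.toRingHom (X ⟨k, hk⟩) = l k := by simp [φ]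
  rw [Ideal.map_span, himage, hlk] at hreg
  exact hreg

lemma prefixIdeal_eq_idealOfVars {l : ℕ → MvPolynomial σ K} {N : ℕ}
    (hl : ∀ k, (l k).IsHomogeneous 1) (hspan : ∀ i, X i ∈ Submodule.span K (l '' Set.Iio N)) :
    prefixIdeal l N = idealOfVars σ K := by
  refine le_antisymm (Ideal.span_le.2 ?_) (Ideal.span_le.2 ?_)
  · rintro _ ⟨k, -, rfl⟩
    exact mem_idealOfVars_of_isHomogeneous_one (hl k)
  · rintro _ ⟨i, rfl⟩
    exact Submodule.span_le_restrictScalars K (MvPolynomial σ K) _ (hspan i)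

lemma irreducible_of_isHomogeneous_one {a : MvPolynomial σ K} (ha : a.IsHomogeneous 1)
    (h0 : a ≠ 0) : Irreducible a := by
  refine irreducible_of_totalDegree_eq_one (ha.totalDegree h0) fun c hc => ?_
  obtain ⟨m, hm⟩ := ne_zero_iff.1 h0
  exact isUnit_iff_ne_zero.2 fun hc0 => hm (zero_dvd_iff.1 (hc0 ▸ hc m))

end LinearForms

section Retraction

variable {K σ : Type*} [Field K] {J : Ideal (MvPolynomial σ K)}
  {φ : MvPolynomial σ K →ₐ[K] MvPolynomial σ K}

lemma sub_algHom_mem (hφ : ∀ i, X i - φ (X i) ∈ J) (f : MvPolynomial σ K) : f - φ f ∈ J := by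
  have hcomp : (Ideal.Quotient.mkₐ K J).comp φ = Ideal.Quotient.mkₐ K J :=
    algHom_ext fun i => ((Ideal.Quotient.mk_eq_mk_iff_sub_mem _ _).2 (hφ i)).symm
  exact (Ideal.Quotient.mk_eq_mk_iff_sub_mem _ _).1 (DFunLike.congr_fun hcomp f).symm

lemma mem_sup_span_singleton_iff_algHom_dvd (hφ : ∀ i, X i - φ (X i) ∈ J)
    (hJ : J ≤ RingHom.ker φ) {q f : MvPolynomial σ K} :
    f ∈ J ⊔ Ideal.span {q} ↔ φ q ∣ φ f := by
  constructor
  · intro hf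
    obtain ⟨u, hu, v, hv, rfl⟩ := Submodule.mem_sup.1 hf
    obtain ⟨g, rfl⟩ := Ideal.mem_span_singleton.1 hv
    rw [map_add, (RingHom.mem_ker).1 (hJ hu), zero_add, map_mul]
    exact dvd_mul_right _ _
  · rintro ⟨g, hg⟩
    have hsplit : f = (f - φ f - (q - φ q) * g) + q * g := by rw [hg]; ring
    rw [hsplit]
    exact Submodule.add_mem_sup (J.sub_mem (sub_algHom_mem hφ f)
      (J.mul_mem_right g (sub_algHom_mem hφ q))) (Ideal.mem_span_singleton.2 (dvd_mul_right q g))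

lemma isSMulRegular_sup_span_singleton_of_algHom (hφ : ∀ i, X i - φ (X i) ∈ J)
    (hJ : J ≤ RingHom.ker φ) {q a : MvPolynomial σ K} (ha : (φ a).IsHomogeneous 1)
    (ha0 : φ a ≠ 0) {ψ : MvPolynomial σ K →ₐ[K] K} (hψa : ψ (φ a) = 0) (hψq : ψ (φ q) ≠ 0) :
    IsSMulRegular (MvPolynomial σ K ⧸ J ⊔ Ideal.span {q}) a := by
  refine (isSMulRegular_quotient_iff_mem_of_smul_mem _ _).2 fun f hf => ?_
  rw [mem_sup_span_singleton_iff_algHom_dvd hφ hJ] at hf ⊢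
  rw [smul_eq_mul, map_mul] at hf
  have hndvd : ¬ φ a ∣ φ q := fun ⟨g, hg⟩ => hψq (by rw [hg, map_mul, hψa, zero_mul])
  exact ((irreducible_of_isHomogeneous_one ha ha0).isRelPrime_iff_not_dvd.2
    hndvd).symm.dvd_of_dvd_mul_left hf

end Retraction

section Colon

variable {R : Type*} [CommRing R] {I I' : Ideal R} {w a : R}

lemma mul_mem_sup_span_singleton_iff (hcolon : ∀ f, w * f ∈ I ↔ f ∈ I')
    (ha : IsSMulRegular (R ⧸ I ⊔ Ideal.span {w}) a) (f : R) :
    w * f ∈ I ⊔ Ideal.span {a} ↔ f ∈ I' ⊔ Ideal.span {a} := by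
  constructor
  · intro hf
    obtain ⟨u, hu, v, hv, huv⟩ := Submodule.mem_sup.1 hf
    obtain ⟨g, rfl⟩ := Ideal.mem_span_singleton.1 hv
    have hag : a • g ∈ I ⊔ Ideal.span {w} := by
      have heq : a • g = -u + w * f := by rw [← huv, smul_eq_mul]; ring
      rw [heq]
      exact Submodule.add_mem_sup (I.neg_mem hu)
        (Ideal.mem_span_singleton.2 (dvd_mul_right w f))
    obtain ⟨u', hu', v', hv', rfl⟩ :=
      Submodule.mem_sup.1 (mem_of_isSMulRegular_quotient_of_smul_mem ha hag)
    obtain ⟨h, rfl⟩ := Ideal.mem_span_singleton.1 hv'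
    have hsub : f - a * h ∈ I' := by
      rw [← hcolon]
      have heq : w * (f - a * h) = u + a * u' := by linear_combination -huv
      rw [heq]
      exact I.add_mem hu (I.mul_mem_left a hu')
    rw [← sub_add_cancel f (a * h)]
    exact Submodule.add_mem_sup hsub (Ideal.mem_span_singleton.2 (dvd_mul_right a h))
  · intro hf
    obtain ⟨u, hu, v, hv, rfl⟩ := Submodule.mem_sup.1 hf
    rw [mul_add]
    exact Submodule.add_mem_sup ((hcolon u).2 hu) (Ideal.mul_mem_left _ w hv)

lemma isSMulRegular_of_colon (hcolon : ∀ f, w * f ∈ I ↔ f ∈ I')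
    (ha : IsSMulRegular (R ⧸ I ⊔ Ideal.span {w}) a) (ha' : IsSMulRegular (R ⧸ I') a) :
    IsSMulRegular (R ⧸ I) a := by
  refine (isSMulRegular_quotient_iff_mem_of_smul_mem _ _).2 fun f hf => ?_
  obtain ⟨u, hu, v, hv, rfl⟩ := Submodule.mem_sup.1
    (mem_of_isSMulRegular_quotient_of_smul_mem ha (Submodule.mem_sup_left hf))
  obtain ⟨g, rfl⟩ := Ideal.mem_span_singleton.1 hv
  have hg : a • g ∈ I' := by
    rw [← hcolon]
    have heq : w * (a • g) = a • (u + w * g) - a * u := by simp only [smul_eq_mul]; ring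
    rw [heq]
    exact I.sub_mem hf (I.mul_mem_left a hu)
  exact I.add_mem hu ((hcolon g).2 (mem_of_isSMulRegular_quotient_of_smul_mem ha' hg))

lemma mul_mem_sup_prefixIdeal_iff {l : ℕ → R} {d : ℕ} (hcolon : ∀ f, w * f ∈ I ↔ f ∈ I')
    (hw : ∀ k < d, IsSMulRegular (R ⧸ I ⊔ Ideal.span {w} ⊔ prefixIdeal l k) (l k)) (f : R) :
    w * f ∈ I ⊔ prefixIdeal l d ↔ f ∈ I' ⊔ prefixIdeal l d := by
  induction d generalizing f with
  | zero => simpa only [prefixIdeal_zero, sup_bot_eq] using hcolon f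
  | succ d ih =>
    rw [prefixIdeal_succ, ← sup_assoc, ← sup_assoc]
    refine mul_mem_sup_span_singleton_iff (ih fun k hk => hw k (by omega)) ?_ f
    rw [sup_right_comm]
    exact hw d d.lt_succ_self

lemma isSMulRegular_sup_prefixIdeal_of_colon {l : ℕ → R} {d : ℕ}
    (hcolon : ∀ f, w * f ∈ I ↔ f ∈ I')
    (hw : ∀ k < d, IsSMulRegular (R ⧸ I ⊔ Ideal.span {w} ⊔ prefixIdeal l k) (l k))
    (hI' : ∀ k < d, IsSMulRegular (R ⧸ I' ⊔ prefixIdeal l k) (l k)) :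
    ∀ k < d, IsSMulRegular (R ⧸ I ⊔ prefixIdeal l k) (l k) := by
  intro k hk
  refine isSMulRegular_of_colon (w := w)
    (mul_mem_sup_prefixIdeal_iff hcolon fun i hi => hw i (hi.trans hk)) ?_ (hI' k hk)
  rw [sup_right_comm]
  exact hw k hk

lemma isSMulRegular_iInf {ι : Type*} {J : ι → Ideal R} (h : ∀ i, IsSMulRegular (R ⧸ J i) a) :
    IsSMulRegular (R ⧸ ⨅ i, J i) a := by
  refine (isSMulRegular_quotient_iff_mem_of_smul_mem _ _).2 fun f hf => ?_
  rw [Ideal.mem_iInf] at hf ⊢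
  exact fun i => mem_of_isSMulRegular_quotient_of_smul_mem (h i) (hf i)

end Colon

namespace Diamond

variable {K : Type*} [Field K] {n : ℕ}

section Coordinates

variable {A : Type*} [CommRing A] [Algebra K A]

lemma forall_X {P : MvPolynomial (Fin (n + 2)) K → Prop} :
    (∀ i, P (X i)) ↔ P (xP K n) ∧ (∀ j, P (yP K n j)) ∧ P (zP K n) := by
  refine ⟨fun h => ⟨h _, fun _ => h _, h _⟩, fun ⟨hx, hy, hz⟩ i => ?_⟩
  induction i using Fin.lastCases with
  | last => exact hz
  | cast i =>
    induction i using Fin.cases with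
    | zero => exact hx
    | succ j => exact hy j

lemma isHomogeneous_xP : (xP K n).IsHomogeneous 1 := isHomogeneous_X K _

lemma isHomogeneous_yP (j : Fin n) : (yP K n j).IsHomogeneous 1 := isHomogeneous_X K _

lemma isHomogeneous_zP : (zP K n).IsHomogeneous 1 := isHomogeneous_X K _

/-- The algebra homomorphism sending `x` to `a`, each `y_j` to `b j` and `z` to `c`. -/
noncomputable def subst (a : A) (b : Fin n → A) (c : A) : MvPolynomial (Fin (n + 2)) K →ₐ[K] A :=
  aeval (Fin.snoc (α := fun _ => A) (Fin.cons a b) c)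

@[simp] lemma subst_xP (a : A) (b : Fin n → A) (c : A) : subst a b c (xP K n) = a := by
  have h0 : (0 : Fin (n + 2)) = Fin.castSucc 0 := rfl
  rw [subst, xP, aeval_X, h0, Fin.snoc_castSucc, Fin.cons_zero]

@[simp] lemma subst_yP (a : A) (b : Fin n → A) (c : A) (j : Fin n) :
    subst a b c (yP K n j) = b j := by
  rw [subst, yP, aeval_X, Fin.snoc_castSucc, Fin.cons_succ]

@[simp] lemma subst_zP (a : A) (b : Fin n → A) (c : A) : subst a b c (zP K n) = c := by
  rw [subst, zP, aeval_X, Fin.snoc_last]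

end Coordinates

section LinearSeq

/-- A sequence of linear forms whose first `n + 2` members generate the maximal ideal. Its first
two members are a system of parameters of the rings under study, for suitable `t`. -/
noncomputable def linearSeq (K : Type*) [Field K] (n : ℕ) (t : K) :
    ℕ → MvPolynomial (Fin (n + 2)) K
  | 0 => zP K n - xP K n
  | 1 => ∑ j, yP K n j + C t * xP K n
  | 2 => xP K n
  | k + 3 => if h : k < n then yP K n ⟨k, h⟩ else 0

lemma isHomogeneous_linearSeq (t : K) : ∀ k, (linearSeq K n t k).IsHomogeneous 1
  | 0 => isHomogeneous_zP.sub isHomogeneous_xP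
  | 1 => (IsHomogeneous.sum _ _ _ fun j _ => isHomogeneous_yP j).add
      (isHomogeneous_xP.C_mul t)
  | 2 => isHomogeneous_xP
  | k + 3 => by
    rw [linearSeq]
    split_ifs with h
    exacts [isHomogeneous_yP _, isHomogeneous_zero _ _ _]

lemma X_mem_span_linearSeq (hn : 0 < n) (t : K) :
    ∀ i, X i ∈ Submodule.span K (linearSeq K n t '' Set.Iio (n + 2)) := by
  set V := Submodule.span K (linearSeq K n t '' Set.Iio (n + 2))
  have hl : ∀ k < n + 2, linearSeq K n t k ∈ V := fun k hk => Submodule.subset_span ⟨k, hk, rfl⟩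
  have hx : xP K n ∈ V := hl 2 (by omega)
  have hy : ∀ j : Fin n, (j : ℕ) < n - 1 → yP K n j ∈ V := fun j hj => by
    simpa only [linearSeq, j.is_lt, dif_pos] using hl (j + 3) (by omega)
  refine forall_X.2 ⟨hx, fun j => ?_, ?_⟩
  · obtain hj | hj := lt_or_ge (j : ℕ) (n - 1)
    · exact hy j hj
    have hrest : ∑ i ∈ Finset.univ.erase j, yP K n i ∈ V := V.sum_mem fun i hi =>
      hy i (by have := Fin.val_ne_of_ne (Finset.ne_of_mem_erase hi); omega)
    have heq : yP K n j
        = linearSeq K n t 1 - t • xP K n - ∑ i ∈ Finset.univ.erase j, yP K n i := by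
      rw [linearSeq, ← Finset.add_sum_erase _ _ (Finset.mem_univ j), smul_eq_C_mul]
      ring
    rw [heq]
    exact V.sub_mem (V.sub_mem (hl 1 (by omega)) (V.smul_mem t hx)) hrest
  · rw [← sub_add_cancel (zP K n) (xP K n)]
    exact V.add_mem (hl 0 (by omega)) hx

lemma linearSeq_mem_prefixIdeal (t : K) {i k : ℕ} (hik : i < k) :
    linearSeq K n t i ∈ prefixIdeal (linearSeq K n t) k :=
  Ideal.subset_span ⟨i, hik, rfl⟩

end LinearSeq

section Cone

variable {c : Fin n → K} {s : Fin n} {a b t : K}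

/-- The ideal of the three-dimensional linear space where `y_j = c_j y_s` for all `j`, with
coordinates `x`, `y_s`, `z` when `c s = 1`. -/
noncomputable def planeIdeal (c : Fin n → K) (s : Fin n) : Ideal (MvPolynomial (Fin (n + 2)) K) :=
  Ideal.span (Set.range fun j => yP K n j - C (c j) * yP K n s)

/-- The quadric `a y_s² + b x z`. -/
noncomputable def conic (s : Fin n) (a b : K) : MvPolynomial (Fin (n + 2)) K :=
  C a * yP K n s ^ 2 + C b * (xP K n * zP K n)

/-- The ideal of the cone over a plane conic which arises as a colon ideal by `x z`. -/
noncomputable def cone (c : Fin n → K) (s : Fin n) (a b : K) :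
    Ideal (MvPolynomial (Fin (n + 2)) K) :=
  planeIdeal c s ⊔ Ideal.span {conic s a b}

lemma conic_mem_cone : conic s a b ∈ cone c s a b :=
  Ideal.mem_sup_right (Ideal.mem_span_singleton_self _)

lemma yP_sub_mem_cone (j : Fin n) : yP K n j - C (c j) * yP K n s ∈ cone c s a b :=
  Ideal.mem_sup_left (Ideal.subset_span ⟨j, rfl⟩)

lemma planeIdeal_le_ker {A : Type*} [CommRing A] [Algebra K A]
    {φ : MvPolynomial (Fin (n + 2)) K →ₐ[K] A}
    (h : ∀ j, φ (yP K n j) = algebraMap K A (c j) * φ (yP K n s)) :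
    planeIdeal c s ≤ RingHom.ker φ := by
  refine Ideal.span_le.2 ?_
  rintro _ ⟨j, rfl⟩
  rw [SetLike.mem_coe, RingHom.mem_ker, map_sub, map_mul, h, ← algebraMap_eq, φ.commutes, sub_self]

/-- The parametrization of the linear space of `planeIdeal c s` by `x`, `y_s` and `z = ζ`. -/
noncomputable def planeSubst (c : Fin n → K) (s : Fin n) (ζ : MvPolynomial (Fin (n + 2)) K) :
    MvPolynomial (Fin (n + 2)) K →ₐ[K] MvPolynomial (Fin (n + 2)) K :=
  subst (xP K n) (fun j => C (c j) * yP K n s) ζ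

lemma X_sub_planeSubst_mem {J : Ideal (MvPolynomial (Fin (n + 2)) K)}
    {ζ : MvPolynomial (Fin (n + 2)) K} (hJ : planeIdeal c s ≤ J) (hζ : zP K n - ζ ∈ J) :
    ∀ i, X i - planeSubst c s ζ (X i) ∈ J := by
  refine forall_X (P := fun f => f - planeSubst c s ζ f ∈ J).2 ⟨?_, fun j => ?_, ?_⟩
  · rw [planeSubst, subst_xP, sub_self]
    exact J.zero_mem
  · rw [planeSubst, subst_yP]
    exact hJ (Ideal.subset_span ⟨j, rfl⟩)
  · rwa [planeSubst, subst_zP]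

lemma planeIdeal_le_ker_planeSubst (hs : c s = 1) (ζ : MvPolynomial (Fin (n + 2)) K) :
    planeIdeal c s ≤ RingHom.ker (planeSubst c s ζ) :=
  planeIdeal_le_ker fun j => by simp [planeSubst, hs, algebraMap_eq]

lemma isSMulRegular_cone_of_subst (hs : c s = 1) {f : MvPolynomial (Fin (n + 2)) K}
    (hf : (planeSubst c s (zP K n) f).IsHomogeneous 1) (hf0 : planeSubst c s (zP K n) f ≠ 0)
    {ξ η ζ : K} (hψ : subst ξ (fun _ => η) ζ (planeSubst c s (zP K n) f) = 0)
    (hconic : a * η ^ 2 + b * (ξ * ζ) ≠ 0) :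
    IsSMulRegular (MvPolynomial (Fin (n + 2)) K ⧸ cone c s a b) f := by
  refine isSMulRegular_sup_span_singleton_of_algHom
    (X_sub_planeSubst_mem le_rfl (by rw [sub_self]; exact Ideal.zero_mem _))
    (planeIdeal_le_ker_planeSubst hs _) hf hf0 hψ ?_
  simpa [conic, planeSubst, hs, ← algebraMap_eq] using hconic

lemma xP_ne_zero : xP K n ≠ 0 := X_ne_zero _

lemma zP_ne_zero : zP K n ≠ 0 := X_ne_zero _

lemma isSMulRegular_cone_xP (hs : c s = 1) (ha : a ≠ 0) :
    IsSMulRegular (MvPolynomial (Fin (n + 2)) K ⧸ cone c s a b) (xP K n) :=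
  isSMulRegular_cone_of_subst (ξ := 0) (η := 1) (ζ := 0) hs
    (by simpa [planeSubst] using isHomogeneous_xP) (by simpa [planeSubst] using xP_ne_zero)
    (by simp [planeSubst]) (by simpa using ha)

lemma isSMulRegular_cone_zP (hs : c s = 1) (ha : a ≠ 0) :
    IsSMulRegular (MvPolynomial (Fin (n + 2)) K ⧸ cone c s a b) (zP K n) :=
  isSMulRegular_cone_of_subst (ξ := 0) (η := 1) (ζ := 0) hs
    (by simpa [planeSubst] using isHomogeneous_zP) (by simpa [planeSubst] using zP_ne_zero)
    (by simp [planeSubst]) (by simpa using ha)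

lemma isSMulRegular_cone_linearSeq_zero (hs : c s = 1)
    (hδ : a * t ^ 2 + b * (∑ j, c j) ^ 2 ≠ 0) :
    IsSMulRegular (MvPolynomial (Fin (n + 2)) K ⧸ cone c s a b) (linearSeq K n t 0) := by
  have himage : planeSubst c s (zP K n) (linearSeq K n t 0) = zP K n - xP K n := by
    simp [planeSubst, linearSeq]
  have hne : zP K n - xP K n ≠ 0 :=
    sub_ne_zero.2 fun h => Fin.last_pos.ne' (X_injective h)
  refine isSMulRegular_cone_of_subst (ξ := ∑ j, c j) (η := -t) (ζ := ∑ j, c j) hs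
    (himage ▸ isHomogeneous_zP.sub isHomogeneous_xP) (himage ▸ hne) (by simp [himage]) ?_
  rwa [neg_sq, ← sq]

/-- Modulo `z - x` the conic becomes a binary form in `y_s` and `x`, coprime to the linear form
`(∑ c_j) y_s + t x` exactly when `a t² + b (∑ c_j)² ≠ 0`. -/
lemma isSMulRegular_cone_linearSeq_one (hs : c s = 1)
    (hδ : a * t ^ 2 + b * (∑ j, c j) ^ 2 ≠ 0) :
    IsSMulRegular (MvPolynomial (Fin (n + 2)) K ⧸
      cone c s a b ⊔ prefixIdeal (linearSeq K n t) 1) (linearSeq K n t 1) := by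
  set φ := planeSubst c s (xP K n)
  have himage : φ (linearSeq K n t 1) = C (∑ j, c j) * yP K n s + C t * xP K n := by
    simp [φ, planeSubst, linearSeq, Finset.sum_mul, ← algebraMap_eq]
  have hne : φ (linearSeq K n t 1) ≠ 0 := fun h => hδ <| by
    have heval := congrArg (subst (a * t) (fun _ => b * ∑ j, c j) (0 : K)) (himage.symm.trans h)
    simp only [← algebraMap_eq, map_add, map_mul, AlgHom.commutes, subst_yP, subst_xP, map_zero,
      Algebra.algebraMap_self_apply] at heval
    linear_combination heval
  rw [prefixIdeal_succ, prefixIdeal_zero, bot_sup_eq, cone, sup_right_comm]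
  refine isSMulRegular_sup_span_singleton_of_algHom (φ := φ)
    (ψ := subst (∑ j, c j) (fun _ => -t) 0)
    (X_sub_planeSubst_mem le_sup_left (Ideal.mem_sup_right (Ideal.mem_span_singleton_self _)))
    (sup_le (planeIdeal_le_ker_planeSubst hs _) ?_) ?_ hne ?_ ?_
  · simp [Ideal.span_le, φ, planeSubst]
  · exact himage ▸ ((isHomogeneous_yP s).C_mul _).add (isHomogeneous_xP.C_mul t)
  · simp [himage, ← algebraMap_eq]
    ring
  · simpa [conic, φ, planeSubst, hs, ← algebraMap_eq, ← sq] using hδ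

lemma isSMulRegular_cone_linearSeq (hs : c s = 1) (hδ : a * t ^ 2 + b * (∑ j, c j) ^ 2 ≠ 0) :
    ∀ k < 2, IsSMulRegular (MvPolynomial (Fin (n + 2)) K ⧸
      cone c s a b ⊔ prefixIdeal (linearSeq K n t) k) (linearSeq K n t k)
  | 0, _ => by
    rw [prefixIdeal_zero, sup_bot_eq]
    exact isSMulRegular_cone_linearSeq_zero hs hδ
  | 1, _ => isSMulRegular_cone_linearSeq_one hs hδ

end Cone

section Axes

/-- The ideal generated by the products `y_i y_j` with `i ≠ j`, i.e. the vanishing ideal of the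
union of the spaces spanned by the axes of `x`, `z` and one `y_k`. -/
noncomputable def axesIdeal (K : Type*) [Field K] (n : ℕ) : Ideal (MvPolynomial (Fin (n + 2)) K) :=
  Ideal.span {f | ∃ i j : Fin n, i < j ∧ f = yP K n i * yP K n j}

lemma yP_mul_yP_mem_axesIdeal {i j : Fin n} (hij : i ≠ j) :
    yP K n i * yP K n j ∈ axesIdeal K n := by
  obtain hij | hij := hij.lt_or_gt
  · exact Ideal.subset_span ⟨i, j, hij, rfl⟩
  · exact Ideal.subset_span ⟨j, i, hij, mul_comm _ _⟩

/-- The retraction onto the space spanned by the axes of `x`, `y_k` and `z`. -/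
noncomputable def axisSubst (K : Type*) [Field K] {n : ℕ} (k : Fin n) :
    MvPolynomial (Fin (n + 2)) K →ₐ[K] MvPolynomial (Fin (n + 2)) K :=
  planeSubst (Pi.single k 1) k (zP K n)

/-- The retraction onto the space spanned by the axes of `x` and `z`. -/
noncomputable def originSubst (K : Type*) [Field K] (n : ℕ) :
    MvPolynomial (Fin (n + 2)) K →ₐ[K] MvPolynomial (Fin (n + 2)) K :=
  subst (xP K n) (fun _ => 0) (zP K n)

lemma axisSubst_yP (k j : Fin n) :
    axisSubst K k (yP K n j) = if j = k then yP K n k else 0 := by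
  simp [axisSubst, planeSubst, Pi.single_apply, apply_ite C]

lemma sub_axisSubst_mul_yP_mem (f : MvPolynomial (Fin (n + 2)) K) (k : Fin n) :
    (f - axisSubst K k f) * yP K n k ∈ axesIdeal K n := by
  suffices hle : planeIdeal (Pi.single k 1) k ≤ (axesIdeal K n).colon {yP K n k} from
    Submodule.mem_colon_singleton.1 (hle (sub_algHom_mem (X_sub_planeSubst_mem le_rfl
      (by rw [sub_self]; exact Ideal.zero_mem _)) f))
  refine Ideal.span_le.2 ?_
  rintro _ ⟨j, rfl⟩
  refine Submodule.mem_colon_singleton.2 ?_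
  obtain rfl | hjk := eq_or_ne j k
  · simp
  · simpa [hjk] using yP_mul_yP_mem_axesIdeal hjk

/-- Inclusion-exclusion for the union of the spaces of `axisSubst K k`, any two of which meet in the
space of `originSubst K n`. -/
lemma sub_inclusionExclusion_mem (f : MvPolynomial (Fin (n + 2)) K) :
    f - (originSubst K n f + ∑ k, (axisSubst K k f - originSubst K n f)) ∈ axesIdeal K n := by
  induction f using MvPolynomial.induction_on with
  | C a => simp [← algebraMap_eq]
  | add p q hp hq =>
    convert Ideal.add_mem _ hp hq using 1
    simp only [map_add, Finset.sum_sub_distrib, Finset.sum_add_distrib]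
    ring
  | mul_X p i hp =>
    refine forall_X (P := fun v => p * v - (originSubst K n (p * v) +
      ∑ k, (axisSubst K k (p * v) - originSubst K n (p * v))) ∈ axesIdeal K n).2
      ⟨?_, fun j => ?_, ?_⟩ i
    · convert Ideal.mul_mem_right (xP K n) _ hp using 1
      simp only [map_mul, axisSubst, planeSubst, originSubst, subst_xP, ← sub_mul,
        ← Finset.sum_mul, ← add_mul]
    · convert sub_axisSubst_mul_yP_mem p j using 1
      simp only [map_mul, originSubst, subst_yP, axisSubst_yP, mul_zero, sub_zero, zero_add,
        mul_ite, Finset.sum_ite_eq, Finset.mem_univ, if_true, sub_mul]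
    · convert Ideal.mul_mem_right (zP K n) _ hp using 1
      simp only [map_mul, axisSubst, planeSubst, originSubst, subst_zP, ← sub_mul,
        ← Finset.sum_mul, ← add_mul]

lemma axesIdeal_le_planeIdeal (k : Fin n) : axesIdeal K n ≤ planeIdeal (Pi.single k 1) k := by
  have hy : ∀ j ≠ k, yP K n j ∈ planeIdeal (K := K) (Pi.single k 1) k := fun j hj =>
    Ideal.subset_span ⟨j, by simp [hj]⟩
  refine Ideal.span_le.2 ?_
  rintro _ ⟨i, j, hij, rfl⟩
  obtain rfl | hik := eq_or_ne i k
  · exact Ideal.mul_mem_left _ _ (hy j hij.ne')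
  · exact Ideal.mul_mem_right _ _ (hy i hik)

lemma axesIdeal_sup_eq_iInf (hn : 0 < n) {A : Ideal (MvPolynomial (Fin (n + 2)) K)}
    (hA : ∀ φ : MvPolynomial (Fin (n + 2)) K →ₐ[K] MvPolynomial (Fin (n + 2)) K,
      φ (xP K n) = xP K n → φ (zP K n) = zP K n → A ≤ A.comap φ) :
    axesIdeal K n ⊔ A = ⨅ k : Fin n, planeIdeal (Pi.single k 1) k ⊔ A := by
  refine le_antisymm (le_iInf fun k => sup_le_sup_right (axesIdeal_le_planeIdeal k) A) ?_
  intro f hf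
  rw [Ideal.mem_iInf] at hf
  have haxis : ∀ k, axisSubst K k f ∈ A := fun k =>
    sup_le ((planeIdeal_le_ker_planeSubst (Pi.single_eq_same _ _) _).trans (Ideal.ker_le_comap _))
      (hA (axisSubst K k) (by simp [axisSubst, planeSubst]) (by simp [axisSubst, planeSubst]))
      (hf k)
  have horigin : originSubst K n f ∈ A :=
    sup_le ((planeIdeal_le_ker fun j => by simp [originSubst]).trans (Ideal.ker_le_comap _))
      (hA (originSubst K n) (by simp [originSubst]) (by simp [originSubst])) (hf ⟨0, hn⟩)
  rw [← sub_add_cancel f (originSubst K n f + ∑ k, (axisSubst K k f - originSubst K n f))]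
  exact Submodule.add_mem_sup (sub_inclusionExclusion_mem f)
    (A.add_mem horigin (A.sum_mem fun k _ => A.sub_mem (haxis k) horigin))

lemma isSMulRegular_axesIdeal_linearSeq (hn : 0 < n) (t : K) :
    ∀ k < 2, IsSMulRegular (MvPolynomial (Fin (n + 2)) K ⧸ axesIdeal K n ⊔
      Ideal.span {xP K n * zP K n} ⊔ prefixIdeal (linearSeq K n t) k) (linearSeq K n t k) := by
  intro k hk
  have hA : ∀ φ : MvPolynomial (Fin (n + 2)) K →ₐ[K] MvPolynomial (Fin (n + 2)) K,
      φ (xP K n) = xP K n → φ (zP K n) = zP K n →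
      Ideal.span {xP K n * zP K n} ⊔ prefixIdeal (linearSeq K n t) k ≤
        (Ideal.span {xP K n * zP K n} ⊔ prefixIdeal (linearSeq K n t) k).comap φ := by
    intro φ hx hz
    refine sup_le ?_ (Ideal.span_le.2 ?_)
    · rw [Ideal.span_singleton_le_iff_mem, Ideal.mem_comap, map_mul, hx, hz]
      exact Ideal.mem_sup_left (Ideal.mem_span_singleton_self _)
    · rintro _ ⟨i, hi, rfl⟩
      obtain rfl : i = 0 := by have : i < k := hi; omega
      have hfix : φ (linearSeq K n t 0) = linearSeq K n t 0 := by
        rw [linearSeq, map_sub, hz, hx]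
      rw [SetLike.mem_coe, Ideal.mem_comap, hfix]
      exact Ideal.mem_sup_right (linearSeq_mem_prefixIdeal t hi)
  rw [sup_assoc, axesIdeal_sup_eq_iInf hn hA]
  refine isSMulRegular_iInf fun i => ?_
  have hcone : cone (Pi.single i 1) i (0 : K) 1 =
      planeIdeal (Pi.single i 1) i ⊔ Ideal.span {xP K n * zP K n} := by
    simp [cone, conic]
  rw [← sup_assoc, ← hcone]
  exact isSMulRegular_cone_linearSeq (Pi.single_eq_same _ _) (by simp) k hk

lemma idealOfVars_sq_le (t : K) {B : Ideal (MvPolynomial (Fin (n + 2)) K)}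
    (hB : axesIdeal K n ⊔ prefixIdeal (linearSeq K n t) 2 ≤ B) :
    idealOfVars (Fin (n + 2)) K * idealOfVars (Fin (n + 2)) K ≤
      B ⊔ Ideal.span {xP K n} * idealOfVars (Fin (n + 2)) K := by
  set T := B ⊔ Ideal.span {xP K n} * idealOfVars (Fin (n + 2)) K
  have hl : ∀ k < 2, linearSeq K n t k ∈ T := fun k hk =>
    Ideal.mem_sup_left (hB (Ideal.mem_sup_right (linearSeq_mem_prefixIdeal t hk)))
  have hyy : ∀ i j, i ≠ j → yP K n i * yP K n j ∈ T := fun i j hij =>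
    Ideal.mem_sup_left (hB (Ideal.mem_sup_left (yP_mul_yP_mem_axesIdeal hij)))
  have hx : ∀ i, xP K n * X i ∈ T := fun i => Ideal.mem_sup_right
    (Ideal.mul_mem_mul (Ideal.mem_span_singleton_self _) (Ideal.subset_span ⟨i, rfl⟩))
  have hz : ∀ i, zP K n * X i ∈ T := fun i => by
    have heq : zP K n * X i = linearSeq K n t 0 * X i + xP K n * X i := by rw [linearSeq]; ring
    rw [heq]
    exact T.add_mem (T.mul_mem_right _ (hl 0 two_pos)) (hx i)
  have hsq : ∀ j, yP K n j * yP K n j ∈ T := fun j => by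
    have heq : yP K n j * yP K n j = yP K n j * linearSeq K n t 1
        - ∑ i ∈ Finset.univ.erase j, yP K n j * yP K n i - C t * (xP K n * yP K n j) := by
      rw [linearSeq, ← Finset.add_sum_erase _ _ (Finset.mem_univ j), ← Finset.mul_sum]
      ring
    rw [heq]
    exact T.sub_mem (T.sub_mem (T.mul_mem_left _ (hl 1 one_lt_two)) (T.sum_mem fun i hi =>
      hyy j i (Finset.ne_of_mem_erase hi).symm)) (T.mul_mem_left _ (hx _))
  have hy : ∀ i j, yP K n j * X i ∈ T := fun i j =>
    forall_X (P := fun v => yP K n j * v ∈ T).2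
      ⟨mul_comm (xP K n) _ ▸ hx _, fun i => (eq_or_ne j i).elim (· ▸ hsq j) (hyy j i),
        mul_comm (zP K n) _ ▸ hz _⟩ i
  rw [idealOfVars, Ideal.span_mul_span', Ideal.span_le]
  rintro _ ⟨_, ⟨i, rfl⟩, _, ⟨j, rfl⟩, rfl⟩
  exact forall_X (P := fun v => v * X j ∈ T).2 ⟨hx j, hy j, hz j⟩ i

lemma idealOfVars_pow_three_le (t : K) :
    idealOfVars (Fin (n + 2)) K ^ 3 ≤ axesIdeal K n ⊔ Ideal.span {xP K n * zP K n} ⊔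
      prefixIdeal (linearSeq K n t) 2 := by
  set m := idealOfVars (Fin (n + 2)) K
  set B := axesIdeal K n ⊔ Ideal.span {xP K n * zP K n} ⊔ prefixIdeal (linearSeq K n t) 2
  have hxx : Ideal.span {xP K n} * Ideal.span {xP K n} ≤ B := by
    have heq : xP K n * xP K n = xP K n * zP K n - xP K n * linearSeq K n t 0 := by
      rw [linearSeq]; ring
    rw [Ideal.span_singleton_mul_span_singleton, Ideal.span_singleton_le_iff_mem, heq]
    exact B.sub_mem
      (Ideal.mem_sup_left (Ideal.mem_sup_right (Ideal.mem_span_singleton_self _)))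
      (B.mul_mem_left _ (Ideal.mem_sup_right (linearSeq_mem_prefixIdeal t two_pos)))
  have hm : m * m ≤ B ⊔ Ideal.span {xP K n} * m :=
    idealOfVars_sq_le t (sup_le_sup_right le_sup_left _)
  calc m ^ 3 = m * m * m := by ring
    _ ≤ (B ⊔ Ideal.span {xP K n} * m) * m := Ideal.mul_mono_left hm
    _ = B * m ⊔ Ideal.span {xP K n} * (m * m) := by rw [Ideal.sup_mul, mul_assoc]
    _ ≤ B ⊔ Ideal.span {xP K n} * (B ⊔ Ideal.span {xP K n} * m) :=
      sup_le_sup Ideal.mul_le_left (Ideal.mul_mono_right hm)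
    _ = B ⊔ (Ideal.span {xP K n} * B ⊔ Ideal.span {xP K n} * Ideal.span {xP K n} * m) := by
      rw [Ideal.mul_sup, mul_assoc]
    _ ≤ B := sup_le le_rfl (sup_le Ideal.mul_le_right (Ideal.mul_le_left.trans hxx))

end Axes

section ConeSocle

variable (c : Fin n → K) (s : Fin n) (a b t : K)

/-- The linear form spanning the socle of the coordinate ring of `cone c s a b` modulo the first two
members of `linearSeq K n t`. -/
noncomputable def coneSocleForm : MvPolynomial (Fin (n + 2)) K :=
  C (a * t) * yP K n s - C (b * ∑ j, c j) * xP K n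

/-- The Artinian reduction of `cone c s a b` by the first two members of `linearSeq K n t`. -/
noncomputable def coneReduction : Ideal (MvPolynomial (Fin (n + 2)) K) :=
  cone c s a b ⊔ prefixIdeal (linearSeq K n t) 2

variable {c s a b t}

lemma isHomogeneous_coneSocleForm : (coneSocleForm c s a b t).IsHomogeneous 1 :=
  ((isHomogeneous_yP s).C_mul _).sub (isHomogeneous_xP.C_mul _)

lemma yP_sub_mem_coneReduction (j : Fin n) :
    yP K n j - C (c j) * yP K n s ∈ coneReduction c s a b t :=
  Ideal.mem_sup_left (yP_sub_mem_cone j)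

lemma zP_sub_xP_mem_coneReduction : zP K n - xP K n ∈ coneReduction c s a b t :=
  Ideal.mem_sup_right (linearSeq_mem_prefixIdeal t two_pos)

lemma binaryLinear_mem_coneReduction :
    C (∑ j, c j) * yP K n s + C t * xP K n ∈ coneReduction c s a b t := by
  have heq : C (∑ j, c j) * yP K n s + C t * xP K n
      = linearSeq K n t 1 - ∑ j, (yP K n j - C (c j) * yP K n s) := by
    rw [linearSeq, Finset.sum_sub_distrib, ← Finset.sum_mul, ← map_sum]
    ring
  rw [heq]
  exact Ideal.sub_mem _ (Ideal.mem_sup_right (linearSeq_mem_prefixIdeal t one_lt_two))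
    (Ideal.sum_mem _ fun j _ => yP_sub_mem_coneReduction j)

lemma binaryQuadric_mem_coneReduction :
    C a * yP K n s ^ 2 + C b * xP K n ^ 2 ∈ coneReduction c s a b t := by
  have heq : C a * yP K n s ^ 2 + C b * xP K n ^ 2
      = conic s a b - C b * xP K n * (zP K n - xP K n) := by
    rw [conic]
    ring
  rw [heq]
  exact Ideal.sub_mem _ (Ideal.mem_sup_left conic_mem_cone)
    (Ideal.mul_mem_left _ _ zP_sub_xP_mem_coneReduction)

lemma X_mul_coneSocleForm_mem :
    ∀ i, X i * coneSocleForm c s a b t ∈ coneReduction c s a b t := by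
  set D := coneReduction c s a b t
  set B := C (∑ j, c j) * yP K n s + C t * xP K n with hB
  set Q := C a * yP K n s ^ 2 + C b * xP K n ^ 2 with hQ
  have hBD : B ∈ D := binaryLinear_mem_coneReduction
  have hQD : Q ∈ D := binaryQuadric_mem_coneReduction
  have hx : xP K n * coneSocleForm c s a b t ∈ D := by
    have heq : xP K n * coneSocleForm c s a b t
        = C a * yP K n s * B - C (∑ j, c j) * Q := by
      rw [coneSocleForm, hB, hQ, C_mul, C_mul]
      ring
    rw [heq]
    exact D.sub_mem (D.mul_mem_left _ hBD) (D.mul_mem_left _ hQD)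
  have hys : yP K n s * coneSocleForm c s a b t ∈ D := by
    have heq : yP K n s * coneSocleForm c s a b t = C t * Q - C b * xP K n * B := by
      rw [coneSocleForm, hB, hQ, C_mul, C_mul]
      ring
    rw [heq]
    exact D.sub_mem (D.mul_mem_left _ hQD) (D.mul_mem_left _ hBD)
  refine forall_X (P := fun v => v * coneSocleForm c s a b t ∈ D).2 ⟨hx, fun j => ?_, ?_⟩
  · rw [← sub_add_cancel (yP K n j) (C (c j) * yP K n s), add_mul, mul_assoc (C (c j))]
    exact D.add_mem (D.mul_mem_right _ (yP_sub_mem_coneReduction j)) (D.mul_mem_left _ hys)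
  · rw [← sub_add_cancel (zP K n) (xP K n), add_mul]
    exact D.add_mem (D.mul_mem_right _ zP_sub_xP_mem_coneReduction) hx

lemma coneSocleForm_mem_socle : coneSocleForm c s a b t ∈ socle (coneReduction c s a b t) := by
  suffices hle : idealOfVars (Fin (n + 2)) K ≤
      (coneReduction c s a b t).colon {coneSocleForm c s a b t} from
    fun v hv => Submodule.mem_colon_singleton.1 (hle hv)
  refine Ideal.span_le.2 ?_
  rintro _ ⟨i, rfl⟩
  exact Submodule.mem_colon_singleton.2 (X_mul_coneSocleForm_mem i)

lemma exists_sub_smul_coneSocleForm_mem (hδ : a * t ^ 2 + b * (∑ j, c j) ^ 2 ≠ 0)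
    {g : MvPolynomial (Fin (n + 2)) K} (hg : g.IsHomogeneous 1) :
    ∃ r : K, g - r • coneSocleForm c s a b t ∈ coneReduction c s a b t := by
  set D := coneReduction c s a b t
  set u := coneSocleForm c s a b t with hu
  set B := C (∑ j, c j) * yP K n s + C t * xP K n with hB
  set δ := a * t ^ 2 + b * (∑ j, c j) ^ 2 with hδ'
  let V : Submodule K (MvPolynomial (Fin (n + 2)) K) := D.restrictScalars K ⊔ K ∙ u
  have hD : ∀ f ∈ D, f ∈ V := fun f hf => Submodule.mem_sup_left hf
  have huV : u ∈ V := Submodule.mem_sup_right (Submodule.mem_span_singleton_self u)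
  have hBV : B ∈ V := hD B binaryLinear_mem_coneReduction
  have hx : xP K n ∈ V := by
    have heq : δ • xP K n = (a * t) • B - (∑ j, c j) • u := by
      simp only [hu, coneSocleForm, hB, hδ', smul_eq_C_mul, C_mul, C_add, C_pow]
      ring
    exact (V.smul_mem_iff hδ).1 (heq ▸ V.sub_mem (V.smul_mem _ hBV) (V.smul_mem _ huV))
  have hys : yP K n s ∈ V := by
    have heq : δ • yP K n s = (b * ∑ j, c j) • B + t • u := by
      simp only [hu, coneSocleForm, hB, hδ', smul_eq_C_mul, C_mul, C_add, C_pow]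
      ring
    exact (V.smul_mem_iff hδ).1 (heq ▸ V.add_mem (V.smul_mem _ hBV) (V.smul_mem _ huV))
  have hX : ∀ i, X i ∈ V := by
    refine forall_X (P := (· ∈ V)).2 ⟨hx, fun j => ?_, ?_⟩
    · rw [← sub_add_cancel (yP K n j) (C (c j) * yP K n s), ← smul_eq_C_mul (yP K n s)]
      exact V.add_mem (hD _ (by
        rw [smul_eq_C_mul]; exact yP_sub_mem_coneReduction j)) (V.smul_mem _ hys)
    · rw [← sub_add_cancel (zP K n) (xP K n)]
      exact V.add_mem (hD _ zP_sub_xP_mem_coneReduction) hx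
  have hgV : g ∈ V := by
    rw [← mem_homogeneousSubmodule, homogeneousSubmodule_one_eq_span_X] at hg
    exact Submodule.span_le.2 (Set.range_subset_iff.2 hX) hg
  obtain ⟨d, hd, e, he, rfl⟩ := Submodule.mem_sup.1 hgV
  obtain ⟨r, rfl⟩ := Submodule.mem_span_singleton.1 he
  exact ⟨r, by rwa [add_sub_cancel_right]⟩

/-- The tangent vector with `x = z = ∑ c_j` and `y_j = -t c_j` at the origin kills the ideal, whose
other generators have no linear terms, but not the linear form. -/
lemma coneSocleForm_notMem (hs : c s = 1) (hδ : a * t ^ 2 + b * (∑ j, c j) ^ 2 ≠ 0) :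
    coneSocleForm c s a b t ∉ coneReduction c s a b t := by
  let φ : MvPolynomial (Fin (n + 2)) K →ₐ[K] DualNumber K :=
    subst ((∑ j, c j) • DualNumber.eps) (fun j => (-(t * c j)) • DualNumber.eps)
      ((∑ j, c j) • DualNumber.eps)
  have hC (r : K) (v : MvPolynomial (Fin (n + 2)) K) : φ (C r * v) = r • φ v := by
    rw [← smul_eq_C_mul, map_smul]
  have hplane : planeIdeal c s ≤ RingHom.ker φ := by
    refine planeIdeal_le_ker fun j => ?_
    rw [← Algebra.smul_def, subst_yP, subst_yP, smul_smul, hs]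
    ring_nf
  have hconic : φ (conic s a b) = 0 := by
    simp [conic, φ, sq]
  have hlinear : ∀ k < 2, φ (linearSeq K n t k) = 0
    | 0, _ => by rw [linearSeq, map_sub, subst_zP, subst_xP, sub_self]
    | 1, _ => by
      simp only [linearSeq, map_add, map_sum, hC, φ, subst_yP, subst_xP, ← Finset.sum_smul,
        smul_smul, ← add_smul, Finset.sum_neg_distrib, ← Finset.mul_sum, neg_add_cancel, zero_smul]
  have hle : coneReduction c s a b t ≤ RingHom.ker φ := by
    refine sup_le (sup_le hplane ?_) (Ideal.span_le.2 ?_)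
    · rwa [Ideal.span_singleton_le_iff_mem]
    · rintro _ ⟨k, hk, rfl⟩
      exact hlinear k hk
  intro hmem
  have hsnd : TrivSqZeroExt.snd (φ (coneSocleForm c s a b t)) = 0 :=
    congrArg TrivSqZeroExt.snd (hle hmem : φ (coneSocleForm c s a b t) = 0)
  simp only [coneSocleForm, map_sub, hC, φ, subst_yP, subst_xP, hs, TrivSqZeroExt.snd_sub,
    TrivSqZeroExt.snd_smul, DualNumber.snd_eps, smul_eq_mul, mul_one] at hsnd
  exact hδ (by linear_combination -hsnd)

end ConeSocle

section Betti

attribute [local instance] MvPolynomial.gradedAlgebra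

variable {I : Ideal (MvPolynomial (Fin (n + 2)) K)} {c : Fin n → K} {s : Fin n} {a b t : K}

lemma exists_sub_mul_mem_of_isHomogeneous_three
    (hI : I.IsHomogeneous (homogeneousSubmodule (Fin (n + 2)) K))
    (hsup : I ⊔ Ideal.span {xP K n * zP K n} = axesIdeal K n ⊔ Ideal.span {xP K n * zP K n})
    {f : MvPolynomial (Fin (n + 2)) K} (hf : f.IsHomogeneous 3) :
    ∃ g : MvPolynomial (Fin (n + 2)) K, g.IsHomogeneous 1 ∧
      f - xP K n * zP K n * g ∈ I ⊔ prefixIdeal (linearSeq K n t) 2 := by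
  have hpow : f ∈ idealOfVars (Fin (n + 2)) K ^ 3 :=
    (mem_pow_idealOfVars_iff 3 f).2 fun m hm =>
      (mdeg_eq_of_isHomogeneous hf (mem_support_iff.1 hm)).ge
  have hmem := idealOfVars_pow_three_le t hpow
  rw [← hsup, sup_right_comm] at hmem
  obtain ⟨p, hp, q, hq, rfl⟩ := Submodule.mem_sup.1 hmem
  obtain ⟨g, rfl⟩ := Ideal.mem_span_singleton'.1 hq
  refine ⟨homogeneousComponent 1 g, homogeneousComponent_isHomogeneous 1 g, ?_⟩
  have hw : ∀ m, coeff m (xP K n * zP K n) ≠ 0 → mdeg m + 0 = 2 := fun m hm =>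
    mdeg_eq_of_isHomogeneous (isHomogeneous_xP.mul isHomogeneous_zP) hm
  have hcomp : homogeneousComponent 3 (g * (xP K n * zP K n))
      = homogeneousComponent 1 g * (xP K n * zP K n) := by
    simpa [shiftedComponent] using shiftedComponent_mul 3 g hw
  have heq : p + g * (xP K n * zP K n) - xP K n * zP K n * homogeneousComponent 1 g
      = homogeneousComponent 3 p := by
    rw [mul_comm (xP K n * zP K n), ← hcomp, sub_eq_iff_eq_add, ← map_add,
      homogeneousComponent_of_mem hf, if_pos rfl]
  rw [heq]
  exact homogeneousComponent_mem_of_mem (Ideal.IsHomogeneous.sup hI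
    (isHomogeneous_prefixIdeal (isHomogeneous_linearSeq t) 2)) hp 3

theorem betti_eq_one (hI : I.IsHomogeneous (homogeneousSubmodule (Fin (n + 2)) K))
    (hsup : I ⊔ Ideal.span {xP K n * zP K n} = axesIdeal K n ⊔ Ideal.span {xP K n * zP K n})
    (hcolon : ∀ f, xP K n * zP K n * f ∈ I ↔ f ∈ cone c s a b) (hs : c s = 1)
    (hδ : a * t ^ 2 + b * (∑ j, c j) ^ 2 ≠ 0) (F : MinGradedFreeRes K (Fin (n + 2)) I) :
    F.betti n (n + 3) = 1 := by
  have hspan := X_mem_span_linearSeq (K := K) s.pos t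
  have hlin := isHomogeneous_linearSeq (K := K) (n := n) t
  have hregL : ∀ k < 2, IsSMulRegular (MvPolynomial (Fin (n + 2)) K ⧸
      I ⊔ Ideal.span {xP K n * zP K n} ⊔ prefixIdeal (linearSeq K n t) k)
      (linearSeq K n t k) := by
    rw [hsup]
    exact isSMulRegular_axesIdeal_linearSeq s.pos t
  have hcolon' := mul_mem_sup_prefixIdeal_iff hcolon hregL
  rw [F.betti_eq_socleRank (d := 2) hI hlin
    (fun k hk => isSMulRegular_prefixIdeal hspan (by omega))
    ((congrArg _ (add_comm 2 n)).trans (prefixIdeal_eq_idealOfVars hlin hspan))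
    (isSMulRegular_sup_prefixIdeal_of_colon hcolon hregL (isSMulRegular_cone_linearSeq hs hδ))]
  refine socleRank_eq_one (t := xP K n * zP K n * coneSocleForm c s a b t)
    ((isHomogeneous_xP.mul isHomogeneous_zP).mul isHomogeneous_coneSocleForm)
    (fun v hv => ?_) (fun h => coneSocleForm_notMem hs hδ ((hcolon' _).1 h)) fun f hf _ => ?_
  · rw [smul_eq_mul, mul_left_comm]
    exact (hcolon' _).2 (coneSocleForm_mem_socle v hv)
  · obtain ⟨g, hg, hfg⟩ := exists_sub_mul_mem_of_isHomogeneous_three hI hsup hf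
    obtain ⟨r, hr⟩ := exists_sub_smul_coneSocleForm_mem hδ hg
    refine ⟨r, ?_⟩
    rw [← sub_add_sub_cancel f (xP K n * zP K n * g), ← mul_smul_comm, ← mul_sub]
    exact Ideal.add_mem _ hfg ((hcolon' _).2 hr)

end Betti

section JoinMeet

attribute [local instance] MvPolynomial.gradedAlgebra

lemma mul_mem_iff_mem_cone {I : Ideal (MvPolynomial (Fin (n + 2)) K)} {c : Fin n → K} {s : Fin n}
    {a b : K} (hs : c s = 1) (ha : a ≠ 0) (hle : I ≤ cone c s a b)
    (hlinear : ∀ j, xP K n * zP K n * (yP K n j - C (c j) * yP K n s) ∈ I)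
    (hconic : xP K n * zP K n * conic s a b ∈ I) (f : MvPolynomial (Fin (n + 2)) K) :
    xP K n * zP K n * f ∈ I ↔ f ∈ cone c s a b := by
  constructor
  · intro hf
    have hxzf : xP K n • zP K n • f ∈ cone c s a b := by
      simpa only [smul_eq_mul, mul_assoc] using hle hf
    exact mem_of_isSMulRegular_quotient_of_smul_mem (isSMulRegular_cone_zP hs ha)
      (mem_of_isSMulRegular_quotient_of_smul_mem (isSMulRegular_cone_xP hs ha) hxzf)
  · suffices hcolon : cone c s a b ≤ I.colon {xP K n * zP K n} from fun hf => by
      simpa only [smul_eq_mul, mul_comm] using Submodule.mem_colon_singleton.1 (hcolon hf)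
    refine sup_le (Ideal.span_le.2 ?_) ((Ideal.span_singleton_le_iff_mem _).2 ?_)
    · rintro _ ⟨j, rfl⟩
      exact Submodule.mem_colon_singleton.2 (by simpa only [smul_eq_mul, mul_comm] using hlinear j)
    · exact Submodule.mem_colon_singleton.2 (by simpa only [smul_eq_mul, mul_comm] using hconic)

lemma isHomogeneous_diamondIdeal :
    (diamondIdeal K n).IsHomogeneous (homogeneousSubmodule (Fin (n + 2)) K) := by
  refine Ideal.homogeneous_span _ _ ?_
  rintro _ ⟨i, j, -, rfl⟩
  exact ⟨2, ((isHomogeneous_yP i).mul (isHomogeneous_yP j)).sub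
    (isHomogeneous_xP.mul isHomogeneous_zP)⟩

lemma yP_mul_yP_sub_mem_diamondIdeal {i j : Fin n} (hij : i ≠ j) :
    yP K n i * yP K n j - xP K n * zP K n ∈ diamondIdeal K n := by
  obtain hij | hij := hij.lt_or_gt
  · exact Ideal.subset_span ⟨i, j, hij, rfl⟩
  · exact Ideal.subset_span ⟨j, i, hij, by rw [mul_comm (yP K n i)]⟩

lemma diamondIdeal_sup_span_xP_mul_zP :
    diamondIdeal K n ⊔ Ideal.span {xP K n * zP K n} =
      axesIdeal K n ⊔ Ideal.span {xP K n * zP K n} := by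
  refine le_antisymm (sup_le (Ideal.span_le.2 ?_) le_sup_right)
    (sup_le (Ideal.span_le.2 ?_) le_sup_right)
  · rintro _ ⟨i, j, hij, rfl⟩
    exact Ideal.sub_mem _ (Ideal.mem_sup_left (yP_mul_yP_mem_axesIdeal hij.ne))
      (Ideal.mem_sup_right (Ideal.mem_span_singleton_self _))
  · rintro _ ⟨i, j, hij, rfl⟩
    rw [← sub_add_cancel (yP K n i * yP K n j) (xP K n * zP K n)]
    exact Submodule.add_mem_sup (yP_mul_yP_sub_mem_diamondIdeal hij.ne)
      (Ideal.mem_span_singleton_self _)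

lemma diamondIdeal_le_cone (s : Fin n) : diamondIdeal K n ≤ cone (fun _ => 1) s 1 (-1) := by
  refine Ideal.span_le.2 ?_
  rintro _ ⟨i, j, -, rfl⟩
  have heq : yP K n i * yP K n j - xP K n * zP K n
      = yP K n j * (yP K n i - C 1 * yP K n s) + yP K n s * (yP K n j - C 1 * yP K n s)
        + conic s 1 (-1) := by
    simp only [conic, C_neg, C_1]
    ring
  rw [heq]
  exact Ideal.add_mem _ (Ideal.add_mem _ (Ideal.mul_mem_left _ _ (yP_sub_mem_cone i))
    (Ideal.mul_mem_left _ _ (yP_sub_mem_cone j))) conic_mem_cone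

lemma xP_mul_zP_mul_sub_mem_diamondIdeal (hn : 3 ≤ n) (i j : Fin n) :
    xP K n * zP K n * (yP K n i - yP K n j) ∈ diamondIdeal K n := by
  obtain ⟨k, hki, hkj⟩ := Fin.exists_ne_and_ne_of_two_lt i j (by omega)
  have heq : xP K n * zP K n * (yP K n i - yP K n j)
      = yP K n j * (yP K n k * yP K n i - xP K n * zP K n)
        - yP K n i * (yP K n k * yP K n j - xP K n * zP K n) := by ring
  rw [heq]
  exact Ideal.sub_mem _ (Ideal.mul_mem_left _ _ (yP_mul_yP_sub_mem_diamondIdeal hki))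
    (Ideal.mul_mem_left _ _ (yP_mul_yP_sub_mem_diamondIdeal hkj))

lemma xP_mul_zP_mul_conic_mem_diamondIdeal (hn : 3 ≤ n) (s : Fin n) :
    xP K n * zP K n * conic s 1 (-1) ∈ diamondIdeal K n := by
  obtain ⟨i, his, -⟩ := Fin.exists_ne_and_ne_of_two_lt s s (by omega)
  have heq : xP K n * zP K n * conic s 1 (-1)
      = yP K n s * (xP K n * zP K n * (yP K n s - yP K n i))
        + xP K n * zP K n * (yP K n i * yP K n s - xP K n * zP K n) := by
    simp only [conic, C_neg, C_1]
    ring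
  rw [heq]
  exact Ideal.add_mem _ (Ideal.mul_mem_left _ _ (xP_mul_zP_mul_sub_mem_diamondIdeal hn s i))
    (Ideal.mul_mem_left _ _ (yP_mul_yP_sub_mem_diamondIdeal his))

lemma betti_diamondIdeal (hn : 3 ≤ n)
    (F : MinGradedFreeRes K (Fin (n + 2)) (diamondIdeal K n)) : F.betti n (n + 3) = 1 := by
  let s : Fin n := ⟨0, by omega⟩
  have hcolon := mul_mem_iff_mem_cone (c := fun _ => (1 : K)) rfl one_ne_zero
    (diamondIdeal_le_cone s)
    (fun j => by simpa using xP_mul_zP_mul_sub_mem_diamondIdeal hn j s)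
    (xP_mul_zP_mul_conic_mem_diamondIdeal hn s)
  -- The first two linear forms are a system of parameters exactly when `t ^ 2 ≠ n ^ 2` in `K`.
  obtain ⟨t, ht⟩ : ∃ t : K, 1 * t ^ 2 + -1 * (∑ _j : Fin n, (1 : K)) ^ 2 ≠ 0 := by
    obtain h0 | h0 := eq_or_ne (n : K) 0
    · exact ⟨1, by simp [h0]⟩
    · exact ⟨0, by simpa using h0⟩
  exact betti_eq_one isHomogeneous_diamondIdeal diamondIdeal_sup_span_xP_mul_zP hcolon rfl ht F

lemma nonempty_minGradedFreeRes_diamondIdeal :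
    Nonempty (MinGradedFreeRes K (Fin (n + 2)) (diamondIdeal K n)) := by
  refine nonempty_minGradedFreeRes isHomogeneous_diamondIdeal (Ideal.span_le.2 ?_)
  rintro _ ⟨i, j, -, rfl⟩
  exact Ideal.sub_mem _
    (Ideal.mul_mem_right _ _ (mem_idealOfVars_of_isHomogeneous_one (isHomogeneous_yP i)))
    (Ideal.mul_mem_right _ _ (mem_idealOfVars_of_isHomogeneous_one isHomogeneous_xP))

end JoinMeet

section InitialIdeal

attribute [local instance] MvPolynomial.gradedAlgebra

lemma isHomogeneous_diamondIni (hn : 1 ≤ n) :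
    (diamondIni K n hn).IsHomogeneous (homogeneousSubmodule (Fin (n + 2)) K) := by
  refine Ideal.homogeneous_span _ _ ?_
  rintro _ ((⟨i, j, -, rfl⟩ | ⟨k, -, rfl⟩) | rfl)
  · exact ⟨_, (isHomogeneous_yP i).mul (isHomogeneous_yP j)⟩
  · exact ⟨_, (isHomogeneous_xP.mul (isHomogeneous_yP k)).mul isHomogeneous_zP⟩
  · exact ⟨_, (isHomogeneous_xP.mul ((isHomogeneous_yP _).pow 2)).mul isHomogeneous_zP⟩

lemma axesIdeal_le_diamondIni (hn : 1 ≤ n) : axesIdeal K n ≤ diamondIni K n hn :=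
  Ideal.span_mono fun _ hf => Or.inl (Or.inl hf)

lemma diamondIni_sup_span_xP_mul_zP (hn : 1 ≤ n) :
    diamondIni K n hn ⊔ Ideal.span {xP K n * zP K n} =
      axesIdeal K n ⊔ Ideal.span {xP K n * zP K n} := by
  refine le_antisymm (sup_le (Ideal.span_le.2 ?_) le_sup_right)
    (sup_le_sup_right (axesIdeal_le_diamondIni hn) _)
  have hw (f : MvPolynomial (Fin (n + 2)) K) :
      xP K n * f * zP K n ∈ axesIdeal K n ⊔ Ideal.span {xP K n * zP K n} :=
    Ideal.mem_sup_right (Ideal.mem_span_singleton.2 ⟨f, mul_right_comm _ _ _⟩)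
  rintro _ ((⟨i, j, hij, rfl⟩ | ⟨k, -, rfl⟩) | rfl)
  exacts [Ideal.mem_sup_left (yP_mul_yP_mem_axesIdeal hij.ne), hw _, hw _]

lemma diamondIni_le_cone (hn : 1 ≤ n) :
    diamondIni K n hn ≤ cone (Pi.single ⟨n - 1, by omega⟩ 1) ⟨n - 1, by omega⟩ 1 0 := by
  set s : Fin n := ⟨n - 1, by omega⟩
  set D := cone (Pi.single s (1 : K)) s 1 0
  have hy : ∀ k : Fin n, (k : ℕ) < n - 1 → yP K n k ∈ D := fun k hk => by
    have hks : k ≠ s := fun h => hk.ne (congrArg Fin.val h)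
    simpa [hks] using (yP_sub_mem_cone k : _ ∈ D)
  have hsq : yP K n s ^ 2 ∈ D := by
    simpa [conic] using (conic_mem_cone : conic s (1 : K) 0 ∈ D)
  refine Ideal.span_le.2 ?_
  rintro _ ((⟨i, j, hij, rfl⟩ | ⟨k, hk, rfl⟩) | rfl)
  · exact D.mul_mem_right _ (hy i (by omega))
  · exact D.mul_mem_right _ (D.mul_mem_left _ (hy k hk))
  · exact D.mul_mem_right _ (D.mul_mem_left _ hsq)

lemma betti_diamondIni (hn : 1 ≤ n)
    (F : MinGradedFreeRes K (Fin (n + 2)) (diamondIni K n hn)) : F.betti n (n + 3) = 1 := by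
  set s : Fin n := ⟨n - 1, by omega⟩
  have hlinear (j : Fin n) : xP K n * zP K n *
      (yP K n j - C ((Pi.single s 1 : Fin n → K) j) * yP K n s) ∈ diamondIni K n hn := by
    obtain rfl | hjs := eq_or_ne j s
    · simp
    have hj : (j : ℕ) < n - 1 := (Nat.le_sub_one_of_lt j.isLt).lt_of_ne (Fin.val_ne_of_ne hjs)
    rw [Pi.single_eq_of_ne hjs, C_0, zero_mul, sub_zero, mul_right_comm]
    exact Ideal.subset_span (Or.inl (Or.inr ⟨j, hj, rfl⟩))
  have hconic : xP K n * zP K n * conic s 1 0 ∈ diamondIni K n hn := by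
    rw [conic, C_1, one_mul, C_0, zero_mul, add_zero, mul_right_comm]
    exact Ideal.subset_span (Or.inr rfl)
  exact betti_eq_one (t := 1) (isHomogeneous_diamondIni hn) (diamondIni_sup_span_xP_mul_zP hn)
    (mul_mem_iff_mem_cone (Pi.single_eq_same _ _) one_ne_zero (diamondIni_le_cone hn)
      hlinear hconic) (Pi.single_eq_same _ _) (by simp) F

lemma nonempty_minGradedFreeRes_diamondIni (hn : 1 ≤ n) :
    Nonempty (MinGradedFreeRes K (Fin (n + 2)) (diamondIni K n hn)) := by
  refine nonempty_minGradedFreeRes (isHomogeneous_diamondIni hn) (Ideal.span_le.2 ?_)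
  have hx : xP K n ∈ idealOfVars (Fin (n + 2)) K :=
    mem_idealOfVars_of_isHomogeneous_one isHomogeneous_xP
  rintro _ ((⟨i, j, -, rfl⟩ | ⟨k, -, rfl⟩) | rfl)
  · exact Ideal.mul_mem_right _ _ (mem_idealOfVars_of_isHomogeneous_one (isHomogeneous_yP i))
  · exact Ideal.mul_mem_right _ _ (Ideal.mul_mem_right _ _ hx)
  · exact Ideal.mul_mem_right _ _ (Ideal.mul_mem_right _ _ hx)

end InitialIdeal

end Diamond

theorem diamond_betti_top (K : Type*) [Field K] (n : ℕ) (hn : 3 ≤ n) :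
    (Nonempty (MinGradedFreeRes K (Fin (n + 2)) (diamondIdeal K n)) ∧
      ∀ F : MinGradedFreeRes K (Fin (n + 2)) (diamondIdeal K n), F.betti n (n + 3) = 1) ∧
    (Nonempty (MinGradedFreeRes K (Fin (n + 2)) (diamondIni K n (by omega))) ∧
      ∀ F : MinGradedFreeRes K (Fin (n + 2)) (diamondIni K n (by omega)),
        F.betti n (n + 3) = 1) :=
  ⟨⟨Diamond.nonempty_minGradedFreeRes_diamondIdeal, Diamond.betti_diamondIdeal hn⟩,
    Diamond.nonempty_minGradedFreeRes_diamondIni _, Diamond.betti_diamondIni _⟩
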